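/- arXiv:math/9508218 — 2 statements merged into one kernel-verified Lean document; each statement's English description precedes it below -/
import Mathlib

section
/- For every S ≥ 2 and k ≥ 0 the following three inequalities hold: x_{k+1,S} ≥ x_{k+1,S−1} + x_{k,S−1}; x_{k+1,S} ≤ x_{k+1,S−1} + x_{k,S}; and x_{k+1,S} ≤ 2·x_{k+1,S−1}. -/
/-!
The proof rests on two facts.

**Recursion.** For `n, S ≥ 2`,
`F n S = min over 1 ≤ m < n of F m S + F m (S - 1) + F (n - m) (S - 1)`.
The upper bound (`F_le_split`) is the divide-and-conquer strategy. For the lower bound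
(`exists_split_le_F`) take a time-optimal solution and the largest `m < n` such that at some time
`u` square `m` carries the lowest pebble and the squares above `m` are never empty after `u`.
Every move lies either in the squares `≤ m` or above `m`, and restricting a solution to either part
leaves the moves legal, so the total time is bounded below by the times of the restricted games.
Optimality enters through `PebbleSolution.up_empty_of_optimal`: once the squares above some `m'` are
occupied, they never become empty again.

**Merging.** The recursion is an infimal convolution, so by induction on `S` the function `F · S` is
convex, and `Δ 1 S = 2` while `Δ 2 S, Δ 3 S, …` is the sorted merge of the sequences
`Δ m S + Δ m (S - 1)` and `Δ r (S - 1)` (`exists_mergeState`). In particular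
`Δ n S ≤ Δ n (S - 1)`. Counting the terms that are at most `2 ^ (k + 1)` gives
`xk (k + 1) S = xk (k + 1) (S - 1) + m`, where `m` is the least positive integer with
`Δ m S + Δ m (S - 1) > 2 ^ (k + 1)` (`exists_xk_eq`). Comparing `m` with `xk k (S - 1)`, `xk k S` and
`xk (k + 1) (S - 1)` gives the three inequalities.
-/

/-- A solution of Bennett's pebble game on `n` squares: a sequence of
configurations `c 0, …, c T` (subsets of `{1, …, n}`), starting empty,
ending with exactly one pebble on square `n`, where consecutive
configurations differ in exactly one square `i`, and a pebble may be added
to or removed from square `i` only if `i = 1` or square `i - 1` is pebbled. -/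
structure PebbleSolution (n : ℕ) where
  T : ℕ
  c : ℕ → Finset ℕ
  subset : ∀ j ≤ T, c j ⊆ Finset.Icc 1 n
  init : c 0 = ∅
  final : c T = {n}
  move : ∀ j, 1 ≤ j → j ≤ T → ∃ i,
    symmDiff (c (j - 1)) (c j) = {i} ∧ (i = 1 ∨ i - 1 ∈ c (j - 1))

/-- The space used by a solution: the maximum number of pebbles on the board. -/
def PebbleSolution.space {n : ℕ} (s : PebbleSolution n) : ℕ :=
  (Finset.range (s.T + 1)).sup fun j => (s.c j).card

/-- `F n S` is the minimum number of moves of a solution of the pebble game on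
`n` squares using at most `S` pebbles, or `⊤` if no such solution exists. -/
noncomputable def F (n S : ℕ) : ℕ∞ :=
  sInf {t : ℕ∞ | ∃ s : PebbleSolution n, s.space ≤ S ∧ t = (s.T : ℕ∞)}

/-- `Δ n S = F (n+1) S - F n S` for `n ≥ 1` when `F (n+1) S` is finite;
`Δ n S = 0` for `n ≤ 0`; `Δ n S = ⊤` otherwise. -/
noncomputable def Δ (n : ℤ) (S : ℕ) : ℕ∞ :=
  if n ≤ 0 then 0
  else if F (n.toNat + 1) S < ⊤ then F (n.toNat + 1) S - F n.toNat S
  else ⊤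

/-- For `n ≥ 2` (and `S ≥ 2`), `mOpt n S` is the least `m` with `1 ≤ m ≤ n - 1`
minimizing `F m S + F m (S-1) + F (n-m) (S-1)`; `mOpt 0 S = mOpt 1 S = 0`. -/
noncomputable def mOpt (n S : ℕ) : ℕ :=
  if n ≤ 1 then 0
  else sInf {m : ℕ | 1 ≤ m ∧ m ≤ n - 1 ∧
    ∀ m', 1 ≤ m' → m' ≤ n - 1 →
      F m S + F m (S - 1) + F (n - m) (S - 1) ≤
        F m' S + F m' (S - 1) + F (n - m') (S - 1)}

/-- `xk k S = min { n ≥ 1 : Δ n S > 2 ^ k }`. -/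
noncomputable def xk (k S : ℕ) : ℕ :=
  sInf {n : ℕ | 1 ≤ n ∧ (2 : ℕ∞) ^ k < Δ (n : ℤ) S}

/-- The minimum time-space product `TS n = min_{S ≥ 1} S * F n S`. -/
noncomputable def TS (n : ℕ) : ℕ :=
  sInf {t : ℕ | ∃ S : ℕ, 1 ≤ S ∧ (t : ℕ∞) = (S : ℕ∞) * F n S}

/-- The binary entropy function. -/
noncomputable def H (γ : ℝ) : ℝ :=
  -γ * Real.logb 2 γ - (1 - γ) * Real.logb 2 (1 - γ)

/-! ### Walks of the pebble game -/

/-- A single legal move from `A` to `B`, stated pointwise: exactly the square `i` changes, and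
`i = 1` or square `i - 1` is pebbled. -/
def PebbleStep (A B : Finset ℕ) : Prop :=
  ∃ i, (∀ x, (x ∈ A ↔ x ∈ B) ↔ x ≠ i) ∧ (i = 1 ∨ i - 1 ∈ A)

/-- `PebblePath n S A B t`: there is a walk of exactly `t` legal moves from configuration `A` to
configuration `B`, on the squares `1, …, n`, never using more than `S` pebbles. -/
inductive PebblePath (n S : ℕ) (A : Finset ℕ) : Finset ℕ → ℕ → Prop
  | nil : A ⊆ Finset.Icc 1 n → A.card ≤ S → PebblePath n S A A 0
  | snoc {B C : Finset ℕ} {t : ℕ} : PebblePath n S A B t → PebbleStep B C →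
      C ⊆ Finset.Icc 1 n → C.card ≤ S → PebblePath n S A C (t + 1)

theorem pebbleStep_of_symmDiff {A B : Finset ℕ}
    (h : ∃ i, symmDiff A B = {i} ∧ (i = 1 ∨ i - 1 ∈ A)) : PebbleStep A B := by
  obtain ⟨i, h1, h2⟩ := h
  refine ⟨i, fun x => ?_, h2⟩
  have := Finset.ext_iff.1 h1 x
  rw [Finset.mem_symmDiff, Finset.mem_singleton] at this
  tauto

theorem PebbleStep.symmDiff {A B : Finset ℕ} (h : PebbleStep A B) :
    ∃ i, symmDiff A B = {i} ∧ (i = 1 ∨ i - 1 ∈ A) := by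
  obtain ⟨i, h1, h2⟩ := h
  refine ⟨i, ?_, h2⟩
  ext x
  have := h1 x
  rw [Finset.mem_symmDiff, Finset.mem_singleton]
  tauto

/-- Moves are reversible. The hypotheses on `0` rule out a move at square `0`, whose truncated
predecessor `0 - 1` is `0` itself. -/
theorem PebbleStep.symm {A B : Finset ℕ} (h : PebbleStep A B) (hA : 0 ∉ A) (hB : 0 ∉ B) :
    PebbleStep B A := by
  obtain ⟨i, h1, h2⟩ := h
  refine ⟨i, fun x => by rw [← h1 x]; exact Iff.comm, ?_⟩
  have hi : i ≠ 0 := by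
    rintro rfl
    exact ((h1 0).1 (by simp [hA, hB])) rfl
  rcases h2 with h2 | h2
  · exact Or.inl h2
  · exact Or.inr (((h1 (i - 1)).2 (by omega)).1 h2)

namespace PebblePath

variable {n S : ℕ} {A B C : Finset ℕ} {t t' : ℕ}

theorem left_ok (h : PebblePath n S A B t) : A ⊆ Finset.Icc 1 n ∧ A.card ≤ S := by
  induction h with
  | nil h1 h2 => exact ⟨h1, h2⟩
  | snoc _ _ _ _ ih => exact ih

theorem right_ok (h : PebblePath n S A B t) : B ⊆ Finset.Icc 1 n ∧ B.card ≤ S := by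
  cases h with
  | nil h1 h2 => exact ⟨h1, h2⟩
  | snoc _ _ h1 h2 => exact ⟨h1, h2⟩

theorem eq_of_length_zero (h : PebblePath n S A B t) (ht : t = 0) : B = A := by
  cases h with
  | nil _ _ => rfl
  | snoc _ _ _ _ => omega

theorem trans (h : PebblePath n S A B t) (h' : PebblePath n S B C t') :
    PebblePath n S A C (t + t') := by
  induction h' with
  | nil _ _ => exact h
  | snoc _ hs h1 h2 ih => exact snoc ih hs h1 h2

theorem symm (h : PebblePath n S A B t) : PebblePath n S B A t := by
  induction h with
  | nil h1 h2 => exact nil h1 h2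
  | @snoc B C t h hs h1 h2 ih =>
    have hB := h.right_ok
    have h0 : ∀ D : Finset ℕ, D ⊆ Finset.Icc 1 n → 0 ∉ D := fun D hD h0 => by
      have := hD h0
      simp at this
    have := (snoc (nil h1 h2) (hs.symm (h0 _ hB.1) (h0 _ h1)) hB.1 hB.2).trans ih
    rwa [zero_add, add_comm] at this

/-- Transport of a walk along a map of configurations that preserves legal moves. -/
theorem map {n' S' : ℕ} (φ : Finset ℕ → Finset ℕ)
    (hφ : ∀ D, D ⊆ Finset.Icc 1 n → D.card ≤ S → φ D ⊆ Finset.Icc 1 n' ∧ (φ D).card ≤ S')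
    (hs : ∀ D E, D ⊆ Finset.Icc 1 n → E ⊆ Finset.Icc 1 n → PebbleStep D E →
      PebbleStep (φ D) (φ E))
    (h : PebblePath n S A B t) : PebblePath n' S' (φ A) (φ B) t := by
  induction h with
  | nil h1 h2 => exact nil (hφ _ h1 h2).1 (hφ _ h1 h2).2
  | snoc h h3 h1 h2 ih =>
    exact snoc ih (hs _ _ h.right_ok.1 h1 h3) (hφ _ h1 h2).1 (hφ _ h1 h2).2

theorem mono {n' S' : ℕ} (hn : n ≤ n') (hS : S ≤ S') (h : PebblePath n S A B t) :
    PebblePath n' S' A B t :=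
  h.map id (fun _ h1 h2 => ⟨h1.trans (Finset.Icc_subset_Icc_right hn), h2.trans hS⟩)
    (fun _ _ _ _ h => h)

theorem exists_seq (h : PebblePath n S A B t) : ∃ c : ℕ → Finset ℕ, c 0 = A ∧ c t = B ∧
    (∀ j ≤ t, c j ⊆ Finset.Icc 1 n ∧ (c j).card ≤ S) ∧
    ∀ j, 1 ≤ j → j ≤ t → PebbleStep (c (j - 1)) (c j) := by
  induction h with
  | nil h1 h2 => exact ⟨fun _ => A, rfl, rfl, fun _ _ => ⟨h1, h2⟩, fun j _ _ => by omega⟩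
  | @snoc B C t h hs h1 h2 ih =>
    obtain ⟨c, c0, ct, hc, hm⟩ := ih
    refine ⟨fun j => if j ≤ t then c j else C, by simpa, by simp, fun j hj => ?_,
      fun j h1j hj => ?_⟩
    · by_cases hjt : j ≤ t
      · simpa [hjt] using hc j hjt
      · simpa [hjt] using ⟨h1, h2⟩
    · by_cases hjt : j ≤ t
      · simpa [hjt, show j ≤ t + 1 by omega] using hm j h1j hjt
      · obtain rfl : j = t + 1 := by omega
        simpa [ct] using hs

theorem F_le (h : PebblePath n S ∅ {n} t) : F n S ≤ t := by
  obtain ⟨c, c0, ct, hc, hm⟩ := h.exists_seq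
  refine sInf_le ⟨⟨t, c, fun j hj => (hc j hj).1, c0, ct,
    fun j h1 h2 => (hm j h1 h2).symmDiff⟩, ?_, rfl⟩
  refine Finset.sup_le fun j hj => (hc j ?_).2
  simpa [Nat.lt_succ_iff] using hj

end PebblePath

/-- The number of times `j ∈ [a, b)` at which a sequence of configurations changes. -/
def changes (d : ℕ → Finset ℕ) (a b : ℕ) : ℕ :=
  ((Finset.Ico a b).filter fun j => d j ≠ d (j + 1)).card

theorem changes_succ (d : ℕ → Finset ℕ) {a b : ℕ} (h : a ≤ b) :
    changes d a (b + 1) = changes d a b + if d b = d (b + 1) then 0 else 1 := by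
  unfold changes
  rw [← Finset.insert_Ico_right_eq_Ico_add_one h, Finset.filter_insert]
  by_cases hd : d b = d (b + 1)
  · simp [hd]
  · simp [hd]

theorem changes_add (d : ℕ → Finset ℕ) {a b e : ℕ} (h : a ≤ b) (h' : b ≤ e) :
    changes d a b + changes d b e = changes d a e := by
  induction e, h' using Nat.le_induction with
  | base => simp [changes]
  | succ e he ih => rw [changes_succ d he, changes_succ d (h.trans he), ← ih, add_assoc]

/-- Dropping the stationary steps of a lazy walk gives a walk. -/
theorem pebblePath_of_lazy {n S : ℕ} (d : ℕ → Finset ℕ) {a b : ℕ} (hab : a ≤ b)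
    (hd : ∀ j, a ≤ j → j ≤ b → d j ⊆ Finset.Icc 1 n ∧ (d j).card ≤ S)
    (hs : ∀ j, a ≤ j → j < b → d j = d (j + 1) ∨ PebbleStep (d j) (d (j + 1))) :
    PebblePath n S (d a) (d b) (changes d a b) := by
  induction b, hab using Nat.le_induction with
  | base =>
    have := hd a le_rfl le_rfl
    simpa [changes] using PebblePath.nil this.1 this.2
  | succ b hab ih =>
    have h := ih (fun j h1 h2 => hd j h1 (by omega)) (fun j h1 h2 => hs j h1 (by omega))
    rw [changes_succ d hab]
    split_ifs with heq
    · rw [← heq]; exact h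
    · have h1 := hd (b + 1) (by omega) le_rfl
      exact h.snoc ((hs b hab (by omega)).resolve_left heq) h1.1 h1.2

/-- The part of a configuration on the squares `1, …, m`. -/
def lowPart (m : ℕ) (A : Finset ℕ) : Finset ℕ := A.filter (· ≤ m)

/-- The part of a configuration on the squares above `m`, renumbered to start at `1`. -/
def upPart (m n : ℕ) (A : Finset ℕ) : Finset ℕ := (Finset.Icc 1 (n - m)).filter (· + m ∈ A)

theorem mem_lowPart {m x : ℕ} {A : Finset ℕ} : x ∈ lowPart m A ↔ x ∈ A ∧ x ≤ m := by
  simp [lowPart]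

theorem mem_upPart {m n x : ℕ} {A : Finset ℕ} (hA : A ⊆ Finset.Icc 1 n) :
    x ∈ upPart m n A ↔ 1 ≤ x ∧ x + m ∈ A := by
  simp only [upPart, Finset.mem_filter, Finset.mem_Icc]
  constructor
  · tauto
  · rintro ⟨h1, h2⟩
    have := Finset.mem_Icc.1 (hA h2)
    exact ⟨⟨h1, by omega⟩, h2⟩

theorem lowPart_subset {m n : ℕ} {A : Finset ℕ} (hA : A ⊆ Finset.Icc 1 n) :
    lowPart m A ⊆ Finset.Icc 1 m := by
  intro x hx
  have h := mem_lowPart.1 hx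
  have := Finset.mem_Icc.1 (hA h.1)
  exact Finset.mem_Icc.2 ⟨this.1, h.2⟩

theorem upPart_subset {m n : ℕ} {A : Finset ℕ} : upPart m n A ⊆ Finset.Icc 1 (n - m) :=
  Finset.filter_subset _ _

theorem card_low_add_up {m n : ℕ} {A : Finset ℕ} (hA : A ⊆ Finset.Icc 1 n) :
    (lowPart m A).card + (upPart m n A).card = A.card := by
  have h : (upPart m n A).card = (A.filter fun x => ¬ x ≤ m).card := by
    refine Finset.card_bij (fun x _ => x + m) ?_ ?_ ?_
    · intro x hx
      have := (mem_upPart hA).1 hx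
      simp only [Finset.mem_filter]
      exact ⟨this.2, by omega⟩
    · intro x _ y _ hxy
      exact Nat.add_right_cancel hxy
    · intro x hx
      simp only [Finset.mem_filter] at hx
      refine ⟨x - m, (mem_upPart hA).2 ⟨by omega, ?_⟩, by omega⟩
      rw [Nat.sub_add_cancel (by omega)]
      exact hx.1
  rw [h, lowPart]
  exact Finset.card_filter_add_card_filter_not _

/-- Every move takes place in exactly one of the two parts, and is legal there. -/
theorem PebbleStep.split {m n : ℕ} {A B : Finset ℕ} (h : PebbleStep A B)
    (hA : A ⊆ Finset.Icc 1 n) (hB : B ⊆ Finset.Icc 1 n) :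
    (PebbleStep (lowPart m A) (lowPart m B) ∧ lowPart m A ≠ lowPart m B ∧
        upPart m n A = upPart m n B) ∨
      (PebbleStep (upPart m n A) (upPart m n B) ∧ upPart m n A ≠ upPart m n B ∧
        lowPart m A = lowPart m B) := by
  obtain ⟨i, h1, h2⟩ := h
  have hi0 : 1 ≤ i := by
    by_contra hi
    obtain rfl : i = 0 := by omega
    have ha : (0 : ℕ) ∉ A := fun h => by simpa using hA h
    have hb : (0 : ℕ) ∉ B := fun h => by simpa using hB h
    exact ((h1 0).1 (by simp [ha, hb])) rfl
  by_cases him : i ≤ m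
  · left
    have hl : ∀ x, (x ∈ lowPart m A ↔ x ∈ lowPart m B) ↔ x ≠ i := by
      intro x
      have := h1 x
      simp only [mem_lowPart]
      by_cases hx : x ≤ m
      · simpa [hx] using this
      · simp only [hx, and_false, true_iff]; omega
    refine ⟨⟨i, hl, ?_⟩, fun he => (hl i).1 (by rw [he]) rfl, ?_⟩
    · rcases h2 with h2 | h2
      · exact Or.inl h2
      · exact Or.inr (mem_lowPart.2 ⟨h2, by omega⟩)
    · ext x
      rw [mem_upPart hA, mem_upPart hB]
      by_cases hx : 1 ≤ x
      · simpa [hx] using (h1 (x + m)).2 (by omega)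
      · simp [hx]
  · right
    have hl : ∀ x, (x ∈ upPart m n A ↔ x ∈ upPart m n B) ↔ x ≠ i - m := by
      intro x
      have := h1 (x + m)
      simp only [mem_upPart hA, mem_upPart hB]
      by_cases hx : 1 ≤ x
      · simp only [hx, true_and, this]; omega
      · simp only [hx, false_and, true_iff]; omega
    refine ⟨⟨i - m, hl, ?_⟩, fun he => (hl (i - m)).1 (by rw [he]) rfl, ?_⟩
    · by_cases hi : i - m = 1
      · exact Or.inl hi
      · right
        rw [mem_upPart hA]
        refine ⟨by omega, ?_⟩
        rw [show i - m - 1 + m = i - 1 by omega]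
        exact h2.resolve_left (by omega)
    · ext x
      rw [mem_lowPart, mem_lowPart]
      by_cases hx : x ≤ m
      · simpa [hx] using (h1 x).2 (by omega)
      · simp [hx]

/-! ### The recursion for `F` -/

theorem F_exists {n S : ℕ} (h : F n S ≠ ⊤) :
    ∃ s : PebbleSolution n, s.space ≤ S ∧ F n S = s.T := by
  have hne : {t : ℕ∞ | ∃ s : PebbleSolution n, s.space ≤ S ∧ t = (s.T : ℕ∞)}.Nonempty := by
    by_contra hne
    rw [Set.not_nonempty_iff_eq_empty] at hne
    exact h (by rw [F, hne, sInf_empty])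
  exact csInf_mem hne

namespace PebbleSolution

variable {n : ℕ} (s : PebbleSolution n)

theorem card_le {S : ℕ} (hs : s.space ≤ S) {j : ℕ} (hj : j ≤ s.T) : (s.c j).card ≤ S :=
  (Finset.le_sup (f := fun j => (s.c j).card) (Finset.mem_range.2 (Nat.lt_succ_of_le hj))).trans hs

theorem step {j : ℕ} (hj : j < s.T) : PebbleStep (s.c j) (s.c (j + 1)) :=
  pebbleStep_of_symmDiff (s.move (j + 1) (by omega) hj)

theorem path {S : ℕ} (hs : s.space ≤ S) {a : ℕ} (ha : a ≤ s.T) :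
    PebblePath n S (s.c a) (s.c s.T) (s.T - a) := by
  have h : ∀ b, a ≤ b → b ≤ s.T → PebblePath n S (s.c a) (s.c b) (b - a) := by
    intro b hab
    induction b, hab using Nat.le_induction with
    | base =>
      intro h
      simpa using PebblePath.nil (s.subset a h) (s.card_le hs h)
    | succ b hab ih =>
      intro h
      have := (ih (by omega)).snoc (s.step (by omega)) (s.subset _ h) (s.card_le hs h)
      rwa [show b + 1 - a = b - a + 1 by omega]
  exact h _ ha le_rfl

/-- The moves of a solution are distributed between the lower and the upper part. -/
theorem changes_low_add_up (m : ℕ) {b : ℕ} (hb : b ≤ s.T) :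
    changes (fun j => lowPart m (s.c j)) 0 b + changes (fun j => upPart m n (s.c j)) 0 b = b := by
  induction b with
  | zero => simp [changes]
  | succ b ih =>
    have ih := ih (by omega)
    rw [changes_succ _ (Nat.zero_le b), changes_succ _ (Nat.zero_le b)]
    rcases (s.step (by omega : b < s.T)).split (m := m) (s.subset b (by omega))
      (s.subset (b + 1) hb) with ⟨-, h1, h2⟩ | ⟨-, h1, h2⟩
    · rw [if_neg h1, if_pos h2]; omega
    · rw [if_pos h2, if_neg h1]; omega

theorem low_path (m S : ℕ) {a b : ℕ} (hab : a ≤ b) (hb : b ≤ s.T)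
    (hc : ∀ j, a ≤ j → j ≤ b → (lowPart m (s.c j)).card ≤ S) :
    PebblePath m S (lowPart m (s.c a)) (lowPart m (s.c b))
      (changes (fun j => lowPart m (s.c j)) a b) := by
  refine pebblePath_of_lazy (fun j => lowPart m (s.c j)) hab
    (fun j h1 h2 => ⟨lowPart_subset (s.subset j (by omega)), hc j h1 h2⟩) fun j h1 h2 => ?_
  rcases (s.step (by omega : j < s.T)).split (m := m) (s.subset j (by omega))
      (s.subset (j + 1) (by omega)) with ⟨h, -, -⟩ | ⟨-, -, h⟩
  · exact Or.inr h
  · exact Or.inl h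

theorem up_path (m S : ℕ) {a b : ℕ} (hab : a ≤ b) (hb : b ≤ s.T)
    (hc : ∀ j, a ≤ j → j ≤ b → (upPart m n (s.c j)).card ≤ S) :
    PebblePath (n - m) S (upPart m n (s.c a)) (upPart m n (s.c b))
      (changes (fun j => upPart m n (s.c j)) a b) := by
  refine pebblePath_of_lazy (fun j => upPart m n (s.c j)) hab
    (fun j h1 h2 => ⟨upPart_subset, hc j h1 h2⟩) fun j h1 h2 => ?_
  rcases (s.step (by omega : j < s.T)).split (m := m) (s.subset j (by omega))
      (s.subset (j + 1) (by omega)) with ⟨-, -, h⟩ | ⟨h, -, -⟩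
  · exact Or.inl h
  · exact Or.inr h

/-- In a time-optimal solution the squares above `m`, once occupied, never become empty again:
otherwise all the moves made there up to that time could be left out. -/
theorem up_empty_of_optimal {S : ℕ} (hs : s.space ≤ S) (hopt : F n S = s.T) {m v w : ℕ}
    (hmn : m ≤ n) (hvw : v ≤ w) (hw : w ≤ s.T) (he : upPart m n (s.c w) = ∅) :
    upPart m n (s.c v) = ∅ := by
  have hlow : lowPart m (s.c w) = s.c w := by
    refine Finset.eq_of_subset_of_card_le (Finset.filter_subset _ _) ?_
    have := card_low_add_up (m := m) (s.subset w hw)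
    rw [he, Finset.card_empty] at this
    omega
  have h1 := (s.low_path m S (Nat.zero_le w) hw (fun j _ hj =>
    (Finset.card_filter_le _ _).trans (s.card_le hs (by omega)))).mono hmn le_rfl
  have h2 := s.path hs hw
  simp only [hlow, s.init] at h1
  rw [s.final] at h2
  have h0 : lowPart m ∅ = ∅ := rfl
  rw [h0] at h1
  have h3 := (h1.trans h2).F_le
  rw [hopt] at h3
  have h3 : s.T ≤ changes (fun j => lowPart m (s.c j)) 0 w + (s.T - w) := by exact_mod_cast h3
  have h4 := s.changes_low_add_up m hw
  have h5 := changes_add (fun j => upPart m n (s.c j)) (Nat.zero_le v) hvw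
  have h6 : changes (fun j => upPart m n (s.c j)) 0 v = 0 := by omega
  have h7 := s.up_path m S (Nat.zero_le v) (hvw.trans hw) (fun j _ hj => by
    have := card_low_add_up (m := m) (s.subset j (by omega))
    have := s.card_le hs (show j ≤ s.T by omega)
    omega)
  rw [h6, s.init] at h7
  rw [h7.eq_of_length_zero rfl]
  simp [upPart]

/-- Square `n` is pebbled for the last time from some configuration `c t` without a pebble on
square `n`; from then on it stays pebbled. -/
theorem exists_last_placement : ∃ t < s.T, n ∉ s.c t ∧ (n = 1 ∨ n - 1 ∈ s.c t) ∧
    ∀ v, t < v → v ≤ s.T → n ∈ s.c v := by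
  classical
  have hP : ∃ t, t ≤ s.T ∧ n ∉ s.c t := ⟨0, Nat.zero_le _, by simp [s.init]⟩
  obtain ⟨t0, ht0, hnt0⟩ := hP
  set t := Nat.findGreatest (fun t => n ∉ s.c t) s.T with ht
  have h1 : n ∉ s.c t := Nat.findGreatest_spec (P := fun t => n ∉ s.c t) ht0 hnt0
  have h2 : t ≤ s.T := Nat.findGreatest_le _
  have h3 : ∀ v, t < v → v ≤ s.T → n ∈ s.c v := fun v hv hvT => by
    by_contra h
    exact Nat.findGreatest_is_greatest hv hvT h
  have h4 : t < s.T := by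
    refine lt_of_le_of_ne h2 fun h => h1 ?_
    rw [h, s.final]
    simp
  refine ⟨t, h4, h1, ?_, h3⟩
  obtain ⟨i, hi, hi'⟩ := s.step h4
  have : n = i := by
    by_contra hne
    exact h1 (((hi n).2 hne).2 (h3 (t + 1) (by omega) h4))
  rw [← this] at hi'
  exact hi'

end PebbleSolution

theorem F_one {S : ℕ} (hS : 1 ≤ S) : F 1 S = 1 := by
  apply le_antisymm
  · have h : PebblePath 1 S ∅ {1} (0 + 1) :=
      (PebblePath.nil (by simp) (by simp)).snoc ⟨1, by simp, Or.inl rfl⟩ (by simp) (by simpa)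
    simpa using h.F_le
  · refine le_sInf ?_
    rintro t ⟨s, -, rfl⟩
    have : s.T ≠ 0 := fun h => by
      have h1 := s.final
      rw [h, s.init] at h1
      simp at h1
    exact_mod_cast Nat.one_le_iff_ne_zero.2 this

/-- Placing a pebble on square `n ≥ 2` needs a second pebble on square `n - 1`. -/
theorem F_space_one {n : ℕ} (hn : 2 ≤ n) : F n 1 = ⊤ := by
  by_contra h
  obtain ⟨s, hs, -⟩ := F_exists h
  obtain ⟨t, ht, h1, h2, h3⟩ := s.exists_last_placement
  have h2 := h2.resolve_left (by omega)
  have h4 := h3 (t + 1) (by omega) ht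
  obtain ⟨i, hi, -⟩ := s.step ht
  have hni : n = i := by
    by_contra hne
    exact h1 (((hi n).2 hne).2 h4)
  have h5 : n - 1 ∈ s.c (t + 1) := ((hi (n - 1)).2 (by omega)).1 h2
  have := (Finset.card_le_one.1 (s.card_le hs (show t + 1 ≤ s.T by omega))) _ h4 _ h5
  omega

/-- The divide-and-conquer strategy: pebble square `m`, use it to pebble square `n` with the
remaining `S - 1` pebbles, and finally remove the pebble on `m` by a reversed solution. -/
theorem F_le_split {n m S : ℕ} (hS : 2 ≤ S) (hm : 1 ≤ m) (hmn : m < n) :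
    F n S ≤ F m S + F m (S - 1) + F (n - m) (S - 1) := by
  by_cases h1 : F m S = ⊤
  · simp [h1]
  by_cases h2 : F m (S - 1) = ⊤
  · simp [h2]
  by_cases h3 : F (n - m) (S - 1) = ⊤
  · simp [h3]
  obtain ⟨s1, hs1, e1⟩ := F_exists h1
  obtain ⟨s2, hs2, e2⟩ := F_exists h2
  obtain ⟨s3, hs3, e3⟩ := F_exists h3
  have p1 := s1.path hs1 (Nat.zero_le _)
  have p2 := s2.path hs2 (Nat.zero_le _)
  have p3 := s3.path hs3 (Nat.zero_le _)
  rw [PebbleSolution.init, PebbleSolution.final, Nat.sub_zero] at p1 p2 p3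
  have q1 := p1.mono hmn.le (le_refl S)
  have q2 : PebblePath n S (insert n ∅) (insert n {m}) s2.T := by
    refine p2.map (fun D => insert n D) (fun D h1 h2 => ⟨?_, ?_⟩) fun D E hD hE hs => ?_
    · intro x hx
      rcases Finset.mem_insert.1 hx with rfl | hx
      · simp; omega
      · have := Finset.mem_Icc.1 (h1 hx)
        simp; omega
    · have := Finset.card_insert_le n D
      omega
    · obtain ⟨i, hi, hi'⟩ := hs
      have hnD : n ∉ D := fun h => by have := Finset.mem_Icc.1 (hD h); omega
      have hnE : n ∉ E := fun h => by have := Finset.mem_Icc.1 (hE h); omega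
      have hin : n ≠ i := (hi n).1 (by simp [hnD, hnE])
      refine ⟨i, fun x => ?_, hi'.imp_right (Finset.mem_insert_of_mem)⟩
      by_cases hx : x = n
      · subst hx; simpa
      · simpa [hx] using hi x
  have q3 : PebblePath n S (insert m (Finset.image (· + m) ∅))
      (insert m (Finset.image (· + m) {n - m})) s3.T := by
    refine p3.map (fun D => insert m (D.image (· + m))) (fun D h1 h2 => ⟨?_, ?_⟩)
      fun D E hD hE hs => ?_
    · intro x hx
      rcases Finset.mem_insert.1 hx with rfl | hx
      · simp; omega
      · obtain ⟨y, hy, rfl⟩ := Finset.mem_image.1 hx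
        have := Finset.mem_Icc.1 (h1 hy)
        simp; omega
    · have := Finset.card_insert_le m (D.image (· + m))
      have := Finset.card_image_le (s := D) (f := (· + m))
      omega
    · have h0 : ∀ G : Finset ℕ, G ⊆ Finset.Icc 1 (n - m) → ∀ x,
          (x ∈ insert m (G.image (· + m)) ↔ m ≤ x ∧ (x = m ∨ x - m ∈ G)) := by
        intro G hG x
        simp only [Finset.mem_insert, Finset.mem_image]
        constructor
        · rintro (rfl | ⟨y, hy, rfl⟩)
          · exact ⟨le_rfl, Or.inl rfl⟩
          · exact ⟨by omega, Or.inr (by simpa using hy)⟩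
        · rintro ⟨h1, h2 | h2⟩
          · exact Or.inl h2
          · exact Or.inr ⟨_, h2, by omega⟩
      obtain ⟨i, hi, hi'⟩ := hs
      have z : ∀ G : Finset ℕ, G ⊆ Finset.Icc 1 (n - m) → 0 ∉ G := fun G hG h => by
        simpa using hG h
      have hi0 : 0 ≠ i := (hi 0).1 (by simp [z D hD, z E hE])
      refine ⟨i + m, fun x => ?_, Or.inr ?_⟩
      · rw [h0 D hD, h0 E hE]
        have := hi (x - m)
        by_cases h1 : m ≤ x
        · by_cases h2 : x = m
          · subst h2
            simp; omega
          · simp only [h1, h2, true_and, false_or, this]; omega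
        · simp only [h1, false_and, true_iff]; omega
      · rw [h0 D hD]
        refine ⟨by omega, ?_⟩
        rcases hi' with rfl | h
        · left; omega
        · right; rwa [show i + m - 1 - m = i - 1 by omega]
  have e : (insert m (Finset.image (· + m) {n - m}) : Finset ℕ) = insert n {m} := by
    ext x
    simp [Nat.sub_add_cancel hmn.le, or_comm]
  rw [e] at q3
  simp only [Finset.image_empty, insert_empty_eq] at q2 q3
  have h := ((q1.trans q3).trans q2.symm).F_le
  rw [e1, e2, e3]
  refine h.trans (le_of_eq ?_)
  push_cast
  ring

/-- Lower bound matching the divide-and-conquer strategy. In an optimal solution choose the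
largest `m < n` for which, at some time `u`, square `m` carries the lowest pebble and from then on
the squares above `m` are never empty. Up to time `u` the squares `≤ m` see a solution for `m`
with `S` pebbles, after `u` a reversed one with `S - 1` pebbles. By the choice of `m`
the squares above `m` never hold `S` pebbles, so they see a solution for `n - m` with `S - 1`
pebbles. -/
theorem exists_split_le_F {n S : ℕ} (hS : 2 ≤ S) (hn : 2 ≤ n) :
    ∃ m, 1 ≤ m ∧ m < n ∧ F m S + F m (S - 1) + F (n - m) (S - 1) ≤ F n S := by
  classical
  by_cases htop : F n S = ⊤
  · exact ⟨1, le_rfl, by omega, by rw [htop]; exact le_top⟩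
  obtain ⟨s, hs, hopt⟩ := F_exists htop
  let Good : ℕ → Prop := fun m => m < n ∧ ∃ u ≤ s.T, lowPart m (s.c u) = {m} ∧
    ∀ v, u < v → v ≤ s.T → upPart m n (s.c v) ≠ ∅
  have hmin : ∀ v ≤ s.T, ∀ h : (s.c v).Nonempty,
      lowPart ((s.c v).min' h) (s.c v) = {(s.c v).min' h} := by
    intro v hv h
    ext x
    rw [mem_lowPart, Finset.mem_singleton]
    constructor
    · rintro ⟨h1, h2⟩
      exact le_antisymm h2 (Finset.min'_le _ _ h1)
    · rintro rfl
      exact ⟨Finset.min'_mem _ _, le_rfl⟩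
  have hex : ∃ m ≤ n, Good m := by
    obtain ⟨t, ht, -, h2, h3⟩ := s.exists_last_placement
    have h2 := h2.resolve_left (by omega)
    have hle := Finset.min'_le _ _ h2
    refine ⟨(s.c t).min' ⟨_, h2⟩, by omega, by omega, t, ht.le, hmin t ht.le _, fun v h4 h5 => ?_⟩
    refine Finset.ne_empty_of_mem (a := n - (s.c t).min' ⟨_, h2⟩)
      ((mem_upPart (s.subset v h5)).2 ⟨by omega, ?_⟩)
    rw [Nat.sub_add_cancel (by omega)]
    exact h3 v h4 h5
  obtain ⟨m0, hm0, hg0⟩ := hex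
  set m := Nat.findGreatest Good n with hm
  have hg : Good m := Nat.findGreatest_spec hm0 hg0
  have hmax : ∀ m', m < m' → m' ≤ n → ¬ Good m' := fun m' h1 h2 =>
    Nat.findGreatest_is_greatest h1 h2
  obtain ⟨hmn, u, hu, hlow, hup⟩ := hg
  have hm1 : 1 ≤ m := by
    have h : m ∈ lowPart m (s.c u) := by rw [hlow]; simp
    exact (Finset.mem_Icc.1 (lowPart_subset (s.subset u hu) h)).1
  have hcard : ∀ v ≤ s.T, (lowPart m (s.c v)).card + (upPart m n (s.c v)).card ≤ S := fun v hv => by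
    rw [card_low_add_up (s.subset v hv)]
    exact s.card_le hs hv
  have hupcard : ∀ v ≤ s.T, (upPart m n (s.c v)).card ≤ S - 1 := by
    intro v hv
    have h1 := hcard v hv
    rcases Finset.eq_empty_or_nonempty (lowPart m (s.c v)) with he | he
    swap
    · have := he.card_pos
      omega
    have h2 := card_low_add_up (m := m) (s.subset v hv)
    rw [he, Finset.card_empty] at h2
    suffices (s.c v).card ≤ 1 by omega
    rcases Finset.eq_empty_or_nonempty (s.c v) with h0 | h0
    · simp [h0]
    set m' := (s.c v).min' h0 with hm'
    have hmem : m' ∈ s.c v := Finset.min'_mem _ _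
    have hmm' : m < m' := by
      by_contra hlt
      have : m' ∈ lowPart m (s.c v) := mem_lowPart.2 ⟨hmem, by omega⟩
      simp [he] at this
    have hm'n : m' ≤ n := (Finset.mem_Icc.1 (s.subset v hv hmem)).2
    have hl := hmin v hv h0
    rw [← hm'] at hl
    have hu' : upPart m' n (s.c v) = ∅ := by
      rcases hm'n.lt_or_eq with hlt | heq
      · have hng := hmax m' hmm' hm'n
        have : ∃ w, v < w ∧ w ≤ s.T ∧ upPart m' n (s.c w) = ∅ := by
          by_contra hno
          push Not at hno
          exact hng ⟨hlt, v, hv, hl, fun w h1 h2 => (hno w h1 h2).ne_empty⟩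
        obtain ⟨w, h3, h4, h5⟩ := this
        exact s.up_empty_of_optimal hs hopt hm'n h3.le h4 h5
      · simp [upPart, heq]
    have := card_low_add_up (m := m') (s.subset v hv)
    rw [hl, hu'] at this
    simp at this
    omega
  have p1 := s.low_path m S (Nat.zero_le u) hu (fun j _ hj => by
    have := hcard j (by omega)
    omega)
  have p2 := s.low_path m (S - 1) hu le_rfl (fun j hj hjT => by
    rcases hj.eq_or_lt with rfl | hlt
    · rw [hlow]; simp; omega
    · have := (Finset.nonempty_iff_ne_empty.2 (hup j hlt hjT)).card_pos
      have := hcard j hjT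
      omega)
  have p3 := s.up_path m (S - 1) (Nat.zero_le s.T) le_rfl (fun j _ hj => hupcard j hj)
  have el0 : lowPart m (s.c 0) = ∅ := by rw [s.init]; rfl
  have eu0 : upPart m n (s.c 0) = ∅ := by rw [s.init]; simp [upPart]
  have elT : lowPart m (s.c s.T) = ∅ := by
    rw [s.final, lowPart, Finset.filter_singleton, if_neg (by omega)]
  have euT : upPart m n (s.c s.T) = {n - m} := by
    ext x
    rw [mem_upPart (s.subset _ le_rfl), s.final, Finset.mem_singleton, Finset.mem_singleton]
    omega
  rw [el0, hlow] at p1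
  rw [elT, hlow] at p2
  rw [eu0, euT] at p3
  refine ⟨m, hm1, hmn, ?_⟩
  have h1 := p1.F_le
  have h2 := p2.symm.F_le
  have h3 := p3.F_le
  rw [hopt]
  refine (add_le_add (add_le_add h1 h2) h3).trans ?_
  have h4 := changes_add (fun j => lowPart m (s.c j)) (Nat.zero_le u) hu
  have h5 := s.changes_low_add_up m le_rfl
  exact_mod_cast (show _ ≤ s.T by rw [h4, h5])

/-! ### Convexity of `F` in the number of squares -/

theorem Δ_eq_top {n S : ℕ} (hn : 1 ≤ n) (h : F (n + 1) S = ⊤) : Δ (n : ℤ) S = ⊤ := by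
  have h0 : ¬ (n : ℤ) ≤ 0 := by omega
  simp only [Δ, h0, if_false, Int.toNat_natCast, h, lt_irrefl]

theorem Δ_eq_of_add {n S : ℕ} {d : ℕ∞} (hn : 1 ≤ n) (hf : F n S ≠ ⊤)
    (h : F (n + 1) S = F n S + d) : Δ (n : ℤ) S = d := by
  by_cases hd : d = ⊤
  · rw [Δ_eq_top hn (by simp [h, hd]), hd]
  · have h0 : ¬ (n : ℤ) ≤ 0 := by omega
    have h1 : F (n + 1) S < ⊤ := by
      rw [h]
      exact WithTop.add_lt_top.2 ⟨lt_top_iff_ne_top.2 hf, lt_top_iff_ne_top.2 hd⟩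
    simp only [Δ, h0, if_false, Int.toNat_natCast, h1, if_true]
    rw [h]
    exact (ENat.addLECancellable_of_ne_top hf).add_tsub_cancel_left

/-- `Δ · S` is nondecreasing on the positive integers and sums up to `F · S`. -/
structure Regular (S : ℕ) : Prop where
  mono : ∀ i j : ℕ, 1 ≤ i → i ≤ j → Δ (i : ℤ) S ≤ Δ (j : ℤ) S
  add : ∀ i : ℕ, 1 ≤ i → F (i + 1) S = F i S + Δ (i : ℤ) S

theorem F_two {S : ℕ} (hS : 2 ≤ S) : F 2 S = 3 := by
  have h : F 1 S + F 1 (S - 1) + F (2 - 1) (S - 1) = 3 := by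
    rw [F_one (by omega), show 2 - 1 = 1 from rfl, F_one (by omega)]
    norm_num
  apply le_antisymm
  · rw [← h]
    exact F_le_split hS le_rfl (by omega)
  · obtain ⟨m, h1, h2, h3⟩ := exists_split_le_F hS (le_refl 2)
    obtain rfl : m = 1 := by omega
    rwa [h] at h3

theorem Δ_one {S : ℕ} (hS : 2 ≤ S) : Δ ((1 : ℕ) : ℤ) S = 2 := by
  apply Δ_eq_of_add le_rfl
  · rw [F_one (by omega)]; simp
  · rw [F_one (by omega), F_two hS]; norm_num

theorem two_le_Δ_one {S : ℕ} (hS : 1 ≤ S) : 2 ≤ Δ ((1 : ℕ) : ℤ) S := by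
  rcases hS.eq_or_lt with rfl | h
  · rw [Δ_eq_top le_rfl (F_space_one le_rfl)]; exact le_top
  · rw [Δ_one h]

/-- The slope `Δ m S + Δ m (S - 1)` of `m ↦ F m S + F m (S - 1)`. -/
noncomputable def pairSlope (m S : ℕ) : ℕ∞ := Δ (m : ℤ) S + Δ (m : ℤ) (S - 1)

/-- Partial convexity and telescoping of `F · S` below `n`. -/
structure RegularBelow (n S : ℕ) : Prop where
  mono : ∀ i j : ℕ, 1 ≤ i → i ≤ j → j < n → Δ (i : ℤ) S ≤ Δ (j : ℤ) S
  add : ∀ i : ℕ, 1 ≤ i → i < n → F (i + 1) S = F i S + Δ (i : ℤ) S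

theorem RegularBelow.slope_mono {n S i j : ℕ} (h : RegularBelow n S) (hr : Regular (S - 1))
    (hi : 1 ≤ i) (hij : i ≤ j) (hj : j < n) : pairSlope i S ≤ pairSlope j S :=
  add_le_add (h.mono i j hi hij hj) (hr.mono i j hi hij)

/-- The pair `(m, r)` satisfies the first-order optimality conditions for minimizing
`F m S + F m (S - 1) + F r (S - 1)` subject to `m + r = n`. -/
structure BalancedSplit (n S m r : ℕ) : Prop where
  hm : 1 ≤ m
  hr : 1 ≤ r
  sum : m + r = n
  low : ∀ i, 1 ≤ i → i < m → pairSlope i S ≤ Δ (r : ℤ) (S - 1)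
  up : ∀ j, 1 ≤ j → j < r → Δ (j : ℤ) (S - 1) ≤ pairSlope m S

/-- For convex data the first-order conditions imply optimality: any other split is improved by
moving one unit towards `(m, r)`. -/
theorem BalancedSplit.F_eq {n S m r : ℕ} (hS : 2 ≤ S) (h : BalancedSplit n S m r) (hr : Regular (S - 1))
    (hb : RegularBelow (n - 1) S) : F n S = F m S + F m (S - 1) + F r (S - 1) := by
  obtain ⟨hm1, hr1, hsum, hlow, hup⟩ := h
  have A : ∀ k m' r', m' + k = m → m' + r' = n → 1 ≤ m' →
      F m S + F m (S - 1) + F r (S - 1) ≤ F m' S + F m' (S - 1) + F r' (S - 1) := by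
    intro k
    induction k with
    | zero =>
      intro m' r' h1 h2 h3
      obtain rfl : m' = m := by omega
      obtain rfl : r' = r := by omega
      exact le_rfl
    | succ k ih =>
      intro m' r' h1 h2 h3
      obtain ⟨q, rfl⟩ : ∃ q, r' = q + 1 := ⟨r' - 1, by omega⟩
      refine (ih (m' + 1) q (by omega) (by omega) (by omega)).trans ?_
      have hs : pairSlope m' S ≤ Δ (q : ℤ) (S - 1) :=
        (hlow m' h3 (by omega)).trans (hr.mono r q hr1 (by omega))
      rw [hb.add m' h3 (by omega), hr.add m' h3, hr.add q (by omega)]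
      calc _ = F m' S + F m' (S - 1) + F q (S - 1) + pairSlope m' S := by unfold pairSlope; ring
        _ ≤ F m' S + F m' (S - 1) + F q (S - 1) + Δ (q : ℤ) (S - 1) := by gcongr
        _ = _ := by ring
  have B : ∀ k m' r', m + k = m' → m' + r' = n → 1 ≤ r' →
      F m S + F m (S - 1) + F r (S - 1) ≤ F m' S + F m' (S - 1) + F r' (S - 1) := by
    intro k
    induction k with
    | zero =>
      intro m' r' h1 h2 h3
      obtain rfl : m' = m := by omega
      obtain rfl : r' = r := by omega
      exact le_rfl
    | succ k ih =>
      intro m' r' h1 h2 h3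
      obtain ⟨q, rfl⟩ : ∃ q, m' = q + 1 := ⟨m' - 1, by omega⟩
      refine (ih q (r' + 1) (by omega) (by omega) (by omega)).trans ?_
      have hs : Δ (r' : ℤ) (S - 1) ≤ pairSlope q S :=
        (hup r' h3 (by omega)).trans (hb.slope_mono hr hm1 (by omega) (by omega))
      rw [hb.add q (by omega) (by omega), hr.add q (by omega), hr.add r' h3]
      calc _ = F q S + F q (S - 1) + F r' (S - 1) + Δ (r' : ℤ) (S - 1) := by ring
        _ ≤ F q S + F q (S - 1) + F r' (S - 1) + pairSlope q S := by gcongr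
        _ = _ := by unfold pairSlope; ring
  apply le_antisymm
  · have := F_le_split hS hm1 (show m < n by omega)
    rwa [show n - m = r by omega] at this
  · obtain ⟨m', h1, h2, h3⟩ := exists_split_le_F hS (show 2 ≤ n by omega)
    refine le_trans ?_ h3
    rcases le_total m' m with h | h
    · exact A (m - m') m' (n - m') (by omega) (by omega) h1
    · exact B (m' - m) m' (n - m') (by omega) (by omega) (by omega)

/-- The state of the merging process after `n - 2` steps: `Δ 2 S, Δ 3 S, …` is the sorted merge of
the slopes `pairSlope 1 S, pairSlope 2 S, …` and of `Δ 1 (S - 1), Δ 2 (S - 1), …`; the slopes with index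
`< m` and the increments with index `< r` have been used up by the terms before `Δ n S`. -/
structure MergeState (n S m r : ℕ) : Prop where
  bal : BalancedSplit n S m r
  le_up : ∀ i : ℕ, 1 ≤ i → i < n → Δ (i : ℤ) S ≤ Δ (r : ℤ) (S - 1)
  le_low : ∀ i : ℕ, 1 ≤ i → i < n → Δ (i : ℤ) S ≤ pairSlope m S
  used_low : ∀ i, 1 ≤ i → i < m → ∃ k : ℕ, 1 ≤ k ∧ k < n ∧ pairSlope i S ≤ Δ (k : ℤ) S
  used_up : ∀ j : ℕ, 1 ≤ j → j < r → ∃ k : ℕ, 1 ≤ k ∧ k < n ∧ Δ (j : ℤ) (S - 1) ≤ Δ (k : ℤ) S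

/-- Identification of `Δ n S` from a value `d` that dominates the earlier increments. -/
theorem Δ_eq_of_step {n S : ℕ} {d : ℕ∞} (hn : 2 ≤ n) (h : F (n + 1) S = F n S + d)
    (hd : ∀ i : ℕ, 1 ≤ i → i < n → Δ (i : ℤ) S ≤ d) : Δ (n : ℤ) S = d := by
  by_cases hf : F n S = ⊤
  · have h1 : Δ ((n - 1 : ℕ) : ℤ) S = ⊤ :=
      Δ_eq_top (by omega) (by rwa [Nat.sub_add_cancel (by omega)])
    have h2 := hd (n - 1) (by omega) (by omega)
    rw [h1, top_le_iff] at h2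
    rw [Δ_eq_top (by omega) (by simp [h, hf]), h2]
  · exact Δ_eq_of_add (by omega) hf h

theorem RegularBelow.succ {n S : ℕ} {d : ℕ∞} (hb : RegularBelow n S)
    (h : F (n + 1) S = F n S + d) (hd : ∀ i : ℕ, 1 ≤ i → i < n → Δ (i : ℤ) S ≤ d)
    (he : Δ (n : ℤ) S = d) : RegularBelow (n + 1) S := by
  constructor
  · intro i j h1 h2 h3
    rcases (Nat.lt_succ_iff.1 h3).lt_or_eq with hlt | rfl
    · exact hb.mono i j h1 h2 hlt
    · rcases h2.lt_or_eq with hlt | rfl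
      · rw [he]; exact hd i h1 hlt
      · exact le_rfl
  · intro i h1 h2
    rcases (Nat.lt_succ_iff.1 h2).lt_or_eq with hlt | rfl
    · exact hb.add i h1 hlt
    · rw [h, he]

/-- Induction step in `S`: if `F · (S - 1)` is convex, then every `n ≥ 2` has a state of the merging
process, and `F · S` is convex below `n`. The smaller of the two pending candidates is `Δ n S`, and
consuming it leads to the state for `n + 1`. -/
theorem exists_mergeState {S : ℕ} (hS : 2 ≤ S) (hr : Regular (S - 1)) {n : ℕ} (hn : 2 ≤ n) :
    RegularBelow n S ∧ ∃ m r, MergeState n S m r := by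
  induction n, hn using Nat.le_induction with
  | base =>
    have h1 : ∀ i : ℕ, 1 ≤ i → i < 2 → Δ (i : ℤ) S ≤ Δ ((1 : ℕ) : ℤ) (S - 1) := by
      intro i h1 h2
      obtain rfl : i = 1 := by omega
      rw [Δ_one hS]
      exact two_le_Δ_one (by omega)
    refine ⟨⟨?_, ?_⟩, 1, 1, ⟨⟨le_rfl, le_rfl, rfl, ?_, ?_⟩, h1, ?_, ?_, ?_⟩⟩
    · intro i j h1 h2 h3
      obtain rfl : i = j := by omega
      exact le_rfl
    · intro i h1 h2
      obtain rfl : i = 1 := by omega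
      rw [Δ_one hS, F_one (by omega), F_two hS]
      norm_num
    · intros; omega
    · intros; omega
    · intro i h2 h3
      exact (h1 i h2 h3).trans le_add_self
    · intros; omega
    · intros; omega
  | succ n hn ih =>
    obtain ⟨hb, m, r, hbal, hleu, hlel, husl, husu⟩ := ih
    have hFn := hbal.F_eq hS hr ⟨fun i j h1 h2 h3 => hb.mono i j h1 h2 (by omega),
      fun i h1 h2 => hb.add i h1 (by omega)⟩
    obtain ⟨hm1, hr1, hsum, hlow, hup⟩ := hbal
    rcases le_or_gt (Δ (r : ℤ) (S - 1)) (pairSlope m S) with hc | hc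
    · have hbal' : BalancedSplit (n + 1) S m (r + 1) := by
        refine ⟨hm1, by omega, by omega, fun i h1 h2 => ?_, fun j h1 h2 => ?_⟩
        · exact (hlow i h1 h2).trans (hr.mono r (r + 1) hr1 (by omega))
        · rcases (Nat.lt_succ_iff.1 h2).lt_or_eq with hlt | rfl
          · exact hup j h1 hlt
          · exact hc
      have hF := hbal'.F_eq hS hr hb
      rw [hr.add r hr1, ← add_assoc, ← hFn] at hF
      have hd := Δ_eq_of_step hn hF hleu
      refine ⟨hb.succ hF hleu hd, m, r + 1, hbal', fun i h1 h2 => ?_, fun i h1 h2 => ?_,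
        fun i h1 h2 => ?_, fun j h1 h2 => ?_⟩
      · refine le_trans ?_ (hr.mono r (r + 1) hr1 (by omega))
        rcases (Nat.lt_succ_iff.1 h2).lt_or_eq with hlt | rfl
        · exact hleu i h1 hlt
        · exact hd.le
      · rcases (Nat.lt_succ_iff.1 h2).lt_or_eq with hlt | rfl
        · exact hlel i h1 hlt
        · exact hd.le.trans hc
      · obtain ⟨k, h3, h4, h5⟩ := husl i h1 h2
        exact ⟨k, h3, by omega, h5⟩
      · rcases (Nat.lt_succ_iff.1 h2).lt_or_eq with hlt | rfl
        · obtain ⟨k, h3, h4, h5⟩ := husu j h1 hlt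
          exact ⟨k, h3, by omega, h5⟩
        · exact ⟨n, by omega, by omega, hd.ge⟩
    · have hbal' : BalancedSplit (n + 1) S (m + 1) r := by
        refine ⟨by omega, hr1, by omega, fun i h1 h2 => ?_, fun j h1 h2 => ?_⟩
        · rcases (Nat.lt_succ_iff.1 h2).lt_or_eq with hlt | rfl
          · exact hlow i h1 hlt
          · exact hc.le
        · exact (hup j h1 h2).trans (hb.slope_mono hr hm1 (by omega) (by omega))
      have hF := hbal'.F_eq hS hr hb
      have hF : F (n + 1) S = F n S + pairSlope m S := by
        rw [hF, hFn, hr.add m hm1, hb.add m hm1 (by omega)]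
        unfold pairSlope
        ring
      have hd := Δ_eq_of_step hn hF hlel
      have hb' := hb.succ hF hlel hd
      refine ⟨hb', m + 1, r, hbal', fun i h1 h2 => ?_, fun i h1 h2 => ?_,
        fun i h1 h2 => ?_, fun j h1 h2 => ?_⟩
      · rcases (Nat.lt_succ_iff.1 h2).lt_or_eq with hlt | rfl
        · exact hleu i h1 hlt
        · exact hd.le.trans hc.le
      · refine le_trans ?_ (hb'.slope_mono hr hm1 (by omega) (show m + 1 < n + 1 by omega))
        rcases (Nat.lt_succ_iff.1 h2).lt_or_eq with hlt | rfl
        · exact hlel i h1 hlt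
        · exact hd.le
      · rcases (Nat.lt_succ_iff.1 h2).lt_or_eq with hlt | rfl
        · obtain ⟨k, h3, h4, h5⟩ := husl i h1 hlt
          exact ⟨k, h3, by omega, h5⟩
        · exact ⟨n, by omega, by omega, hd.ge⟩
      · obtain ⟨k, h3, h4, h5⟩ := husu j h1 h2
        exact ⟨k, h3, by omega, h5⟩

theorem regular {S : ℕ} (hS : 1 ≤ S) : Regular S := by
  induction S, hS using Nat.le_induction with
  | base =>
    have h : ∀ i : ℕ, 1 ≤ i → Δ (i : ℤ) 1 = ⊤ := fun i hi =>
      Δ_eq_top hi (F_space_one (by omega))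
    refine ⟨fun i j h1 h2 => ?_, fun i h1 => ?_⟩
    · rw [h j (by omega)]; exact le_top
    · rw [h i h1, F_space_one (by omega)]; simp
  | succ S hS ih =>
    have h := fun n (hn : 2 ≤ n) => (exists_mergeState (S := S + 1) (by omega) ih hn).1
    exact ⟨fun i j h1 h2 => (h (j + 2) (by omega)).mono i j h1 h2 (by omega),
      fun i h1 => (h (i + 2) (by omega)).add i h1 (by omega)⟩

/-- An additional pebble does not increase the increments. -/
theorem Δ_space_anti {S n : ℕ} (hS : 2 ≤ S) (hn : 1 ≤ n) : Δ (n : ℤ) S ≤ Δ (n : ℤ) (S - 1) := by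
  have hr := regular (show 1 ≤ S - 1 by omega)
  obtain ⟨-, m, r, h⟩ := exists_mergeState hS hr (show 2 ≤ n + 1 by omega)
  have := h.bal.sum
  have := h.bal.hm
  exact (h.le_up n hn (by omega)).trans (hr.mono r n h.bal.hr (by omega))

/-- The next increment is at most each of the two pending candidates of the merge. -/
theorem MergeState.next_le {S n m r : ℕ} (hS : 2 ≤ S) (h : MergeState n S m r) :
    Δ (n : ℤ) S ≤ Δ (r : ℤ) (S - 1) ∧ Δ (n : ℤ) S ≤ pairSlope m S := by
  have hr := regular (show 1 ≤ S - 1 by omega)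
  have hR := regular (show 1 ≤ S by omega)
  obtain ⟨hm1, hr1, hsum, -, -⟩ := h.bal
  have hFn := h.bal.F_eq hS hr ⟨fun i j h1 h2 _ => hR.mono i j h1 h2, fun i h1 _ => hR.add i h1⟩
  by_cases hf : F n S = ⊤
  · have h1 : Δ ((n - 1 : ℕ) : ℤ) S = ⊤ :=
      Δ_eq_top (by omega) (by rwa [Nat.sub_add_cancel (by omega)])
    have h2 := h.le_up (n - 1) (by omega) (by omega)
    have h3 := h.le_low (n - 1) (by omega) (by omega)
    rw [h1, top_le_iff] at h2 h3
    simp [h2, h3]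
  · have hadd := hR.add n (by omega)
    constructor
    · have h1 := F_le_split hS hm1 (show m < n + 1 by omega)
      rw [show n + 1 - m = r + 1 by omega, hr.add r hr1, ← add_assoc, ← hFn, hadd] at h1
      exact (ENat.addLECancellable_of_ne_top hf).add_le_add_iff_left.1 h1
    · have h1 := F_le_split hS (show 1 ≤ m + 1 by omega) (show m + 1 < n + 1 by omega)
      have h2 : F n S + pairSlope m S =
          F (m + 1) S + F (m + 1) (S - 1) + F (n + 1 - (m + 1)) (S - 1) := by
        rw [show n + 1 - (m + 1) = r by omega, hFn, hr.add m hm1, hR.add m hm1]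
        unfold pairSlope
        ring
      rw [← h2, hadd] at h1
      exact (ENat.addLECancellable_of_ne_top hf).add_le_add_iff_left.1 h1

/-! ### The thresholds `xk` -/

/-- With `S` pebbles no square beyond `2 ^ (S - 1)` can be reached. -/
theorem F_eq_top {S : ℕ} (hS : 1 ≤ S) : ∀ n, 2 ^ (S - 1) < n → F n S = ⊤ := by
  induction S, hS using Nat.le_induction with
  | base => intro n hn; exact F_space_one (by simp at hn; omega)
  | succ S hS ih =>
    intro n hn
    simp only [Nat.add_sub_cancel] at hn
    have hpow : 2 ^ S = 2 * 2 ^ (S - 1) := by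
      rw [← pow_succ', Nat.sub_add_cancel hS]
    have hpos : 0 < 2 ^ (S - 1) := by positivity
    obtain ⟨m, h1, h2, h3⟩ := exists_split_le_F (show 2 ≤ S + 1 by omega) (show 2 ≤ n by omega)
    simp only [Nat.add_sub_cancel] at h3
    rw [← top_le_iff]
    refine le_trans ?_ h3
    rcases lt_or_ge (2 ^ (S - 1)) m with h | h
    · simp [ih m h]
    · simp [ih (n - m) (by omega)]

theorem xk_spec (k : ℕ) {S : ℕ} (hS : 1 ≤ S) :
    1 ≤ xk k S ∧ (2 : ℕ∞) ^ k < Δ (xk k S : ℤ) S := by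
  have hne : {n : ℕ | 1 ≤ n ∧ (2 : ℕ∞) ^ k < Δ (n : ℤ) S}.Nonempty := by
    refine ⟨2 ^ (S - 1), Nat.one_le_two_pow, ?_⟩
    rw [Δ_eq_top Nat.one_le_two_pow (F_eq_top hS _ (by omega))]
    exact lt_top_iff_ne_top.2 (ENat.natCast_ne_top (2 ^ k))
  exact Nat.sInf_mem hne

theorem xk_le {k S n : ℕ} (hn : 1 ≤ n) (h : (2 : ℕ∞) ^ k < Δ (n : ℤ) S) : xk k S ≤ n :=
  Nat.sInf_le ⟨hn, h⟩

theorem Δ_le_of_lt_xk {k S n : ℕ} (hn : 1 ≤ n) (h : n < xk k S) : Δ (n : ℤ) S ≤ (2 : ℕ∞) ^ k :=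
  not_lt.1 fun h' => absurd (xk_le hn h') (by omega)

/-- Splitting of the threshold: the terms of the merge that are at most `2 ^ (k + 1)` are the first
`xk (k + 1) (S - 1) - 1` increments for `S - 1` and the first `m - 1` slopes. -/
theorem exists_xk_eq {S k : ℕ} (hS : 2 ≤ S) : ∃ m, 1 ≤ m ∧
    xk (k + 1) S = xk (k + 1) (S - 1) + m ∧ (2 : ℕ∞) ^ (k + 1) < pairSlope m S ∧
    ∀ i, 1 ≤ i → i < m → pairSlope i S ≤ (2 : ℕ∞) ^ (k + 1) := by
  have hr := regular (show 1 ≤ S - 1 by omega)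
  obtain ⟨hN1, hN⟩ := xk_spec (k + 1) (show 1 ≤ S by omega)
  set N := xk (k + 1) S with hNdef
  have hN2 : 2 ≤ N := by
    by_contra h
    obtain h : N = 1 := by omega
    rw [h, Δ_one hS] at hN
    have h2 : (2 : ℕ∞) ≤ 2 ^ (k + 1) := by
      exact_mod_cast (Nat.le_self_pow (Nat.succ_ne_zero k) 2)
    exact absurd hN (not_lt.2 h2)
  obtain ⟨-, m, r, h⟩ := exists_mergeState hS hr hN2
  obtain ⟨hu, hl⟩ := h.next_le hS
  have hbelow : ∀ n : ℕ, 1 ≤ n → n < N → Δ (n : ℤ) S ≤ (2 : ℕ∞) ^ (k + 1) :=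
    fun n h1 h2 => Δ_le_of_lt_xk h1 h2
  have hrX : xk (k + 1) (S - 1) = r := by
    refine le_antisymm (xk_le h.bal.hr (hN.trans_le hu)) ?_
    by_contra hlt
    obtain ⟨h1, h2⟩ := xk_spec (k + 1) (show 1 ≤ S - 1 by omega)
    obtain ⟨j, h3, h4, h5⟩ := h.used_up _ h1 (by omega)
    exact absurd (h2.trans_le h5) (not_lt.2 (hbelow j h3 h4))
  refine ⟨m, h.bal.hm, by rw [hrX, ← h.bal.sum, add_comm], hN.trans_le hl, fun i h1 h2 => ?_⟩
  obtain ⟨j, h3, h4, h5⟩ := h.used_low i h1 h2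
  exact h5.trans (hbelow j h3 h4)

/-- Lemma 2.8: recursive inequalities for `xk`. -/
theorem xk_recursive_bounds (S k : ℕ) (hS : 2 ≤ S) :
    xk (k + 1) (S - 1) + xk k (S - 1) ≤ xk (k + 1) S ∧
    xk (k + 1) S ≤ xk (k + 1) (S - 1) + xk k S ∧
    xk (k + 1) S ≤ 2 * xk (k + 1) (S - 1) := by
  obtain ⟨m, hm, hx, hgt, hle⟩ := exists_xk_eq (k := k) hS
  rw [hx]
  have h2 : (2 : ℕ∞) ^ (k + 1) = 2 ^ k + 2 ^ k := by ring
  refine ⟨?_, ?_, ?_⟩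
  · refine Nat.add_le_add_left (xk_le hm (not_le.1 fun h => ?_)) _
    refine absurd hgt (not_lt.2 ?_)
    rw [h2]
    exact add_le_add ((Δ_space_anti hS hm).trans h) h
  · refine Nat.add_le_add_left (not_lt.1 fun hlt => ?_) _
    obtain ⟨h3, h4⟩ := xk_spec k (show 1 ≤ S by omega)
    have h5 := hle _ h3 hlt
    rw [h2] at h5
    exact absurd h5 (not_le.2 (ENat.add_lt_add h4 (h4.trans_le (Δ_space_anti hS h3))))
  · rw [two_mul]
    refine Nat.add_le_add_left (not_lt.1 fun hlt => ?_) _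
    obtain ⟨h3, h4⟩ := xk_spec (k + 1) (show 1 ≤ S - 1 by omega)
    exact absurd (le_add_self.trans (hle _ h3 hlt)) (not_le.2 h4)
end

section
/- For every k ≥ 0 and S ≥ 2: Σ_{i=0}^{k} C(S−1, i) ≤ x_{k,S} ≤ min( C(S+k−1, k), 2^{S−1} ), where C(a, b) denotes the binomial coefficient. -/
namespace Pebble

open Finset

/-! ### Walks between configurations -/

/-- One legal move from configuration `c` to `d`, described pointwise: some square `i ≥ 1` is
toggled, and `i = 1` or square `i - 1` is pebbled. -/
def Step (c d : Finset ℕ) : Prop :=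
  ∃ i, 1 ≤ i ∧ (i = 1 ∨ i - 1 ∈ c) ∧ (∀ x, x ≠ i → (x ∈ c ↔ x ∈ d)) ∧ (i ∈ c ↔ i ∉ d)

/-- `Walk n S t c d`: one can pass from `c` to `d` in exactly `t` moves on the squares
`1, …, n` with at most `S` pebbles at any time. -/
inductive Walk (n S : ℕ) : ℕ → Finset ℕ → Finset ℕ → Prop
  | nil (c : Finset ℕ) : c ⊆ Icc 1 n → c.card ≤ S → Walk n S 0 c c
  | snoc (t : ℕ) (c d e : Finset ℕ) : Walk n S t c d → Step d e → e ⊆ Icc 1 n → e.card ≤ S →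
      Walk n S (t + 1) c e

lemma Step.symm {c d : Finset ℕ} (h : Step c d) : Step d c := by
  obtain ⟨i, h1, h2, h3, h4⟩ := h
  refine ⟨i, h1, ?_, fun x hx => (h3 x hx).symm, by tauto⟩
  rcases h2 with h2 | h2
  · exact Or.inl h2
  · exact Or.inr ((h3 _ (by omega)).1 h2)

lemma Walk.left {n S t : ℕ} {c d : Finset ℕ} (h : Walk n S t c d) :
    c ⊆ Icc 1 n ∧ c.card ≤ S := by
  induction h with
  | nil c h1 h2 => exact ⟨h1, h2⟩
  | snoc t c d e _ _ _ _ ih => exact ih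

lemma Walk.right {n S t : ℕ} {c d : Finset ℕ} (h : Walk n S t c d) :
    d ⊆ Icc 1 n ∧ d.card ≤ S := by
  cases h with
  | nil c h1 h2 => exact ⟨h1, h2⟩
  | snoc t c d e _ _ h1 h2 => exact ⟨h1, h2⟩

lemma Walk.eq_of_zero {n S : ℕ} {c d : Finset ℕ} (h : Walk n S 0 c d) : c = d := by
  cases h with
  | nil => rfl

lemma Walk.trans {n S t u : ℕ} {c d e : Finset ℕ} (h : Walk n S t c d) (k : Walk n S u d e) :
    Walk n S (t + u) c e := by
  induction k with
  | nil => exact h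
  | snoc u d e g _ h1 h2 h3 ih => exact Walk.snoc (t + u) c e g (ih h) h1 h2 h3

lemma Walk.symm {n S t : ℕ} {c d : Finset ℕ} (h : Walk n S t c d) : Walk n S t d c := by
  induction h with
  | nil c h1 h2 => exact .nil c h1 h2
  | snoc t c d e hw h1 h2 h3 ih =>
    have := (Walk.snoc 0 e e d (.nil e h2 h3) h1.symm hw.right.1 hw.right.2).trans ih
    rwa [show t + 1 = 0 + 1 + t by omega]

lemma Walk.map {n S n' S' : ℕ} (φ : Finset ℕ → Finset ℕ)
    (h1 : ∀ c d, c ⊆ Icc 1 n → d ⊆ Icc 1 n → Step c d → Step (φ c) (φ d))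
    (h2 : ∀ c, c ⊆ Icc 1 n → c.card ≤ S → φ c ⊆ Icc 1 n' ∧ (φ c).card ≤ S')
    {t : ℕ} {c d : Finset ℕ} (h : Walk n S t c d) : Walk n' S' t (φ c) (φ d) := by
  induction h with
  | nil c k1 k2 => exact .nil _ (h2 c k1 k2).1 (h2 c k1 k2).2
  | snoc t c d e hw k1 k2 k3 ih =>
    exact .snoc _ _ _ _ ih (h1 _ _ hw.right.1 k2 k1) (h2 e k2 k3).1 (h2 e k2 k3).2

lemma Walk.mono {n S n' S' t : ℕ} {c d : Finset ℕ} (h : Walk n S t c d) (hn : n ≤ n')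
    (hS : S ≤ S') : Walk n' S' t c d :=
  h.map id (fun _ _ _ _ h => h)
    (fun _ h1 h2 => ⟨h1.trans (Icc_subset_Icc_right hn), h2.trans hS⟩)

/-- Shift a walk upwards by `m` and keep a pebble on square `m`, which supports it. -/
lemma Walk.lift {n S t : ℕ} {c d : Finset ℕ} (h : Walk n S t c d) {m : ℕ} (hm : 1 ≤ m) :
    Walk (n + m) (S + 1) t (insert m (c.image (· + m))) (insert m (d.image (· + m))) := by
  refine h.map (fun c => insert m (c.image (· + m))) ?_ ?_
  · rintro c d hc hd ⟨i, h1, h2, h3, h4⟩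
    refine ⟨i + m, by omega, Or.inr ?_, ?_, ?_⟩
    · rcases h2 with rfl | h2
      · simp
      · simp only [mem_insert, mem_image]
        exact Or.inr ⟨i - 1, h2, by omega⟩
    · intro x hx
      simp only [mem_insert, mem_image]
      have key : ∀ y, y + m = x → (y ∈ c ↔ y ∈ d) := fun y hy => h3 y (by omega)
      constructor
      · rintro (h | ⟨y, hy, e⟩)
        · exact Or.inl h
        · exact Or.inr ⟨y, (key y e).1 hy, e⟩
      · rintro (h | ⟨y, hy, e⟩)
        · exact Or.inl h
        · exact Or.inr ⟨y, (key y e).2 hy, e⟩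
    · have hi : i ≠ 0 := by omega
      simpa [hi] using h4
  · intro c hc hcard
    constructor
    · intro x hx
      simp only [mem_insert, mem_image] at hx
      rw [mem_Icc]
      rcases hx with rfl | ⟨y, hy, rfl⟩
      · omega
      · have := mem_Icc.1 (hc hy); omega
    · calc _ ≤ (c.image (· + m)).card + 1 := card_insert_le _ _
        _ ≤ c.card + 1 := Nat.add_le_add_right card_image_le 1
        _ ≤ _ := by omega

/-- Run a walk on the squares `1, …, m` while a pebble rests on a higher square `n`. -/
lemma Walk.park {m S t : ℕ} {c d : Finset ℕ} (h : Walk m S t c d) {n : ℕ} (hn : m < n) :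
    Walk n (S + 1) t (insert n c) (insert n d) := by
  refine h.map (fun c => insert n c) ?_ ?_
  · rintro c d hc hd ⟨i, h1, h2, h3, h4⟩
    have hi : i ≠ n := by
      rintro rfl
      by_cases hic : i ∈ c
      · have := mem_Icc.1 (hc hic); omega
      · have := mem_Icc.1 (hd (show i ∈ d by tauto)); omega
    refine ⟨i, h1, by simp only [mem_insert]; tauto, fun x hx => ?_, ?_⟩
    · simp only [mem_insert, h3 x hx]
    · simpa [hi] using h4
  · intro c hc hcard
    refine ⟨?_, (card_insert_le _ _).trans (by omega)⟩
    intro x hx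
    rw [mem_Icc]
    rcases mem_insert.1 hx with rfl | hx
    · omega
    · have := mem_Icc.1 (hc hx); omega

/-- Bennett's strategy: pebble `m`, pebble `m + k` from there, then unpebble `m`. -/
lemma Walk.bennett {m k S t₁ t₂ t₃ : ℕ} (hm : 1 ≤ m) (hk : 1 ≤ k)
    (h1 : Walk m (S + 1) t₁ ∅ {m}) (h2 : Walk m S t₂ ∅ {m}) (h3 : Walk k S t₃ ∅ {k}) :
    Walk (m + k) (S + 1) (t₁ + t₂ + t₃) ∅ {m + k} := by
  have a1 := h1.mono (n' := m + k) (by omega) le_rfl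
  have a3 := h3.lift hm
  have a2 := h2.symm.park (n := m + k) (by omega)
  have e : insert m (({k} : Finset ℕ).image (· + m)) = insert (m + k) {m} := by
    ext x; simp; omega
  rw [e, Nat.add_comm k m] at a3
  have := (a1.trans (by simpa using a3)).trans (by simpa using a2)
  rwa [show t₁ + t₂ + t₃ = t₁ + t₃ + t₂ by omega]

lemma Walk.exists_seq {n S t : ℕ} {c d : Finset ℕ} (h : Walk n S t c d) :
    ∃ f : ℕ → Finset ℕ, f 0 = c ∧ f t = d ∧ (∀ j ≤ t, f j ⊆ Icc 1 n ∧ (f j).card ≤ S) ∧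
      ∀ j < t, Step (f j) (f (j + 1)) := by
  induction h with
  | nil c h1 h2 => exact ⟨fun _ => c, rfl, rfl, fun _ _ => ⟨h1, h2⟩, fun j hj => by omega⟩
  | snoc t c d e hw h1 h2 h3 ih =>
    obtain ⟨f, f0, ft, fb, fs⟩ := ih
    refine ⟨fun j => if j ≤ t then f j else e, by simpa using f0, by simp, ?_, ?_⟩
    · intro j hj
      by_cases hjt : j ≤ t
      · simpa [hjt] using fb j hjt
      · simpa [hjt] using ⟨h2, h3⟩
    · intro j hj
      by_cases hjt : j = t
      · subst hjt; simpa [ft] using h1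
      · have : j < t := by omega
        simpa [this.le, Nat.succ_le_iff.2 this] using fs j this

/-! ### Projections of a sequence of configurations -/

/-- The part of a configuration on the squares `1, …, m`. -/
def lo (m : ℕ) (c : Finset ℕ) : Finset ℕ := c.filter (· ≤ m)

/-- The part of a configuration above square `m`, renumbered so that `m + 1` becomes `1`. -/
def hi (m : ℕ) (c : Finset ℕ) : Finset ℕ := (c.filter (m < ·)).image (· - m)

lemma mem_lo {m x : ℕ} {c : Finset ℕ} : x ∈ lo m c ↔ x ∈ c ∧ x ≤ m := by simp [lo]

lemma mem_hi {m x : ℕ} {c : Finset ℕ} : x ∈ hi m c ↔ 1 ≤ x ∧ x + m ∈ c := by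
  simp only [hi, mem_image, mem_filter]
  constructor
  · rintro ⟨y, ⟨h1, h2⟩, rfl⟩
    exact ⟨by omega, by rwa [Nat.sub_add_cancel h2.le]⟩
  · rintro ⟨h1, h2⟩
    exact ⟨x + m, ⟨h2, by omega⟩, by omega⟩

lemma card_lo_add_hi (m : ℕ) (c : Finset ℕ) : (lo m c).card + (hi m c).card ≤ c.card := by
  have h : (hi m c).card ≤ (c.filter (fun x => ¬ x ≤ m)).card := by
    unfold hi
    refine card_image_le.trans (le_of_eq ?_)
    congr 1; ext x; simp
  have := card_filter_add_card_filter_not (s := c) (fun x => x ≤ m)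
  unfold lo
  omega

lemma lo_subset {m n : ℕ} {c : Finset ℕ} (h : c ⊆ Icc 1 n) : lo m c ⊆ Icc 1 m := by
  intro x hx
  have := mem_lo.1 hx
  have := mem_Icc.1 (h this.1)
  rw [mem_Icc]; omega

lemma hi_subset {m n : ℕ} {c : Finset ℕ} (h : c ⊆ Icc 1 n) : hi m c ⊆ Icc 1 (n - m) := by
  intro x hx
  have := mem_hi.1 hx
  have := mem_Icc.1 (h this.2)
  rw [mem_Icc]; omega

/-- A move of the full game leaves one of the two projections unchanged and is a legal move of the
other. For a move on square `m + 1` this uses that the renumbered square `1` is always free. -/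
lemma Step.lo_hi {c d : Finset ℕ} (h : Step c d) (m : ℕ) :
    (lo m c = lo m d ∧ Step (hi m c) (hi m d)) ∨ (Step (lo m c) (lo m d) ∧ hi m c = hi m d) := by
  obtain ⟨i, h1, h2, h3, h4⟩ := h
  by_cases him : i ≤ m
  · right
    constructor
    · refine ⟨i, h1, ?_, ?_, ?_⟩
      · rcases h2 with h2 | h2
        · exact Or.inl h2
        · exact Or.inr (mem_lo.2 ⟨h2, by omega⟩)
      · intro x hx; simp [mem_lo, h3 x hx]
      · simp [mem_lo, him, h4]
    · ext x
      simp only [mem_hi]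
      constructor
      · rintro ⟨a, b⟩; exact ⟨a, (h3 _ (by omega)).1 b⟩
      · rintro ⟨a, b⟩; exact ⟨a, (h3 _ (by omega)).2 b⟩
  · left
    constructor
    · ext x
      simp only [mem_lo]
      constructor
      · rintro ⟨a, b⟩; exact ⟨(h3 _ (by omega)).1 a, b⟩
      · rintro ⟨a, b⟩; exact ⟨(h3 _ (by omega)).2 a, b⟩
    · refine ⟨i - m, by omega, ?_, ?_, ?_⟩
      · by_cases hi1 : i = m + 1
        · left; omega
        · right
          rcases h2 with h2 | h2
          · omega
          · rw [mem_hi]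
            exact ⟨by omega, by rwa [show i - m - 1 + m = i - 1 by omega]⟩
      · intro x hx; simp [mem_hi, h3 (x + m) (by omega)]
      · simp only [mem_hi, show i - m + m = i by omega, h4, show 1 ≤ i - m by omega, true_and]

/-- The number of times in `[s, t)` at which the projection `φ` of the sequence `f` changes. -/
def cnt (f : ℕ → Finset ℕ) (φ : Finset ℕ → Finset ℕ) (s t : ℕ) : ℕ :=
  ((Ico s t).filter (fun j => φ (f j) ≠ φ (f (j + 1)))).card

lemma cnt_add (f : ℕ → Finset ℕ) (φ : Finset ℕ → Finset ℕ) {s t u : ℕ} (h1 : s ≤ t)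
    (h2 : t ≤ u) : cnt f φ s t + cnt f φ t u = cnt f φ s u := by
  unfold cnt
  rw [← Ico_union_Ico_eq_Ico h1 h2, filter_union, card_union_of_disjoint]
  exact disjoint_filter_filter (Ico_disjoint_Ico_consecutive s t u)

lemma cnt_succ (f : ℕ → Finset ℕ) (φ : Finset ℕ → Finset ℕ) {s t : ℕ} (h : s ≤ t) :
    cnt f φ s (t + 1) = cnt f φ s t + if φ (f t) ≠ φ (f (t + 1)) then 1 else 0 := by
  rw [← cnt_add f φ h (Nat.le_succ t)]
  congr 1
  simp only [cnt, Nat.succ_eq_add_one, Nat.Ico_succ_singleton, filter_singleton]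
  split_ifs <;> simp

lemma cnt_le (f : ℕ → Finset ℕ) (φ : Finset ℕ → Finset ℕ) (s t : ℕ) : cnt f φ s t ≤ t - s := by
  unfold cnt
  exact (card_filter_le _ _).trans (by simp)

lemma cnt_lo_add_hi {f : ℕ → Finset ℕ} {s t : ℕ} (h : s ≤ t)
    (hf : ∀ j < t, Step (f j) (f (j + 1))) (m : ℕ) :
    cnt f (lo m) s t + cnt f (hi m) s t ≤ t - s := by
  induction t, h using Nat.le_induction with
  | base => simp [cnt]
  | succ t hst ih =>
    have := ih (fun j hj => hf j (by omega))
    rw [cnt_succ _ _ hst, cnt_succ _ _ hst]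
    have : ((if lo m (f t) ≠ lo m (f (t + 1)) then 1 else 0) +
        (if hi m (f t) ≠ hi m (f (t + 1)) then 1 else 0) : ℕ) ≤ 1 := by
      rcases (hf t (by omega)).lo_hi m with ⟨h, -⟩ | ⟨-, h⟩ <;> simp only [h] <;> split_ifs <;>
        simp_all
    omega

/-- A projection that changes only by legal moves traces out a walk, whose length is the number of
times it changes. -/
lemma walk_of_seq {f : ℕ → Finset ℕ} {φ : Finset ℕ → Finset ℕ} {n S s t : ℕ} (h : s ≤ t)
    (hφ : ∀ j < t, φ (f j) = φ (f (j + 1)) ∨ Step (φ (f j)) (φ (f (j + 1))))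
    (hb : ∀ j, s ≤ j → j ≤ t → φ (f j) ⊆ Icc 1 n ∧ (φ (f j)).card ≤ S) :
    Walk n S (cnt f φ s t) (φ (f s)) (φ (f t)) := by
  induction t, h using Nat.le_induction with
  | base => simpa [cnt] using Walk.nil _ (hb s le_rfl le_rfl).1 (hb s le_rfl le_rfl).2
  | succ t hst ih =>
    have ih := ih (fun j hj => hφ j (by omega)) (fun j h1 h2 => hb j h1 (by omega))
    rw [cnt_succ _ _ hst]
    split_ifs with hne
    · have hs := (hφ t (by omega)).resolve_left hne
      exact .snoc _ _ _ _ ih hs (hb _ (by omega) le_rfl).1 (hb _ (by omega) le_rfl).2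
    · rw [not_not] at hne
      rwa [← hne]

lemma walk_lo {f : ℕ → Finset ℕ} {n S s t : ℕ} (h : s ≤ t)
    (hf : ∀ j < t, Step (f j) (f (j + 1))) (hb : ∀ j ≤ t, f j ⊆ Icc 1 n) (m : ℕ)
    (hc : ∀ j, s ≤ j → j ≤ t → (lo m (f j)).card ≤ S) :
    Walk m S (cnt f (lo m) s t) (lo m (f s)) (lo m (f t)) := by
  refine walk_of_seq h (fun j hj => ?_) (fun j h1 h2 => ⟨lo_subset (hb j h2), hc j h1 h2⟩)
  rcases (hf j hj).lo_hi m with h | h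
  · exact Or.inl h.1
  · exact Or.inr h.1

lemma walk_hi {f : ℕ → Finset ℕ} {n S s t : ℕ} (h : s ≤ t)
    (hf : ∀ j < t, Step (f j) (f (j + 1))) (hb : ∀ j ≤ t, f j ⊆ Icc 1 n) (m : ℕ)
    (hc : ∀ j, s ≤ j → j ≤ t → (hi m (f j)).card ≤ S) :
    Walk (n - m) S (cnt f (hi m) s t) (hi m (f s)) (hi m (f t)) := by
  refine walk_of_seq h (fun j hj => ?_) (fun j h1 h2 => ⟨hi_subset (hb j h2), hc j h1 h2⟩)
  rcases (hf j hj).lo_hi m with h | h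
  · exact Or.inr h.2
  · exact Or.inl h.2

/-- Pebbling a nearer square is no harder: forget the lowest squares. -/
lemma Walk.shorten {n S T : ℕ} (h : Walk n S T ∅ {n}) {a : ℕ} (ha : 1 ≤ a) (han : a ≤ n) :
    ∃ t ≤ T, Walk a S t ∅ {a} := by
  obtain ⟨f, f0, fT, fb, fs⟩ := h.exists_seq
  have := walk_hi (Nat.zero_le T) fs (fun j hj => (fb j hj).1) (n - a) (S := S) (fun j _ hj => by
    have := card_lo_add_hi (n - a) (f j)
    have := (fb j hj).2
    omega)
  refine ⟨_, cnt_le f (hi (n - a)) 0 T, ?_⟩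
  rw [f0, fT, Nat.sub_sub_self han] at this
  have e1 : hi (n - a) ∅ = ∅ := by ext x; simp [mem_hi]
  have e2 : hi (n - a) {n} = {a} := by ext x; simp only [mem_hi, mem_singleton]; omega
  rwa [e1, e2] at this

/-! ### The lower bound: every solution splits at some square -/

lemma exists_greatest (p : ℕ → Prop) (N : ℕ) (hN : ∀ x, p x → x ≤ N) (h : ∃ x, p x) :
    ∃ m, p m ∧ ∀ x, p x → x ≤ m := by
  classical
  obtain ⟨x, hx⟩ := h
  exact ⟨Nat.findGreatest p N, Nat.findGreatest_spec (hN x hx) hx,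
    fun y hy => Nat.le_findGreatest (hN y hy) hy⟩

/-- `IsLow n c x`: square `x` is the lowest pebbled square of `c \ {n}`. -/
def IsLow (n : ℕ) (c : Finset ℕ) (x : ℕ) : Prop :=
  x ∈ c ∧ x ≠ n ∧ ∀ y ∈ c, y ≠ n → x ≤ y

lemma exists_isLow {n : ℕ} {c : Finset ℕ} (h : ∃ y ∈ c, y ≠ n) : ∃ x, IsLow n c x := by
  obtain ⟨y, hy, hyn⟩ := h
  have hne : (c.erase n).Nonempty := ⟨y, mem_erase.2 ⟨hyn, hy⟩⟩
  have hm := mem_erase.1 (min'_mem _ hne)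
  exact ⟨(c.erase n).min' hne, hm.2, hm.1,
    fun z hz hzn => min'_le _ _ (mem_erase.2 ⟨hzn, hz⟩)⟩

lemma IsLow.lo_eq {n m : ℕ} {c : Finset ℕ} (h : IsLow n c m) (hm : m < n) : lo m c = {m} := by
  ext x
  simp only [mem_lo, mem_singleton]
  constructor
  · rintro ⟨a, b⟩
    exact le_antisymm b (h.2.2 x a (by omega))
  · rintro rfl; exact ⟨h.1, le_rfl⟩

/-- If the lowest pebble of `c \ {n}`, when there is one, lies at or below `a`, then the part of `c`
above `a` fits into one pebble less. -/
lemma card_hi_le {n S a : ℕ} {c : Finset ℕ} (hS : 1 ≤ S) (hc : c.card ≤ S + 1)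
    (h : ∀ x, IsLow n c x → x ≤ a) : (hi a c).card ≤ S := by
  have key := card_lo_add_hi a c
  by_cases hne : ∃ y ∈ c, y ≠ n
  · obtain ⟨x, hx⟩ := exists_isLow hne
    have : 0 < (lo a c).card := card_pos.2 ⟨x, mem_lo.2 ⟨hx.1, h x hx⟩⟩
    omega
  · push Not at hne
    have : c ⊆ {n} := fun y hy => mem_singleton.2 (hne y hy)
    have := card_le_card this
    rw [card_singleton] at this
    omega

lemma card_lo_le {S a : ℕ} {c : Finset ℕ} (hc : c.card ≤ S + 1) (h : ∃ y ∈ c, a < y) :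
    (lo a c).card ≤ S := by
  obtain ⟨y, hy, hay⟩ := h
  have key := card_lo_add_hi a c
  have : 0 < (hi a c).card :=
    card_pos.2 ⟨y - a, mem_hi.2 ⟨by omega, by rwa [Nat.sub_add_cancel hay.le]⟩⟩
  omega

lemma not_walk_one {n T : ℕ} (hn : 2 ≤ n) (h : Walk n 1 T ∅ {n}) : False := by
  obtain ⟨f, f0, fT, fb, fs⟩ := h.exists_seq
  have : ∀ j ≤ T, n ∉ f j := by
    intro j
    induction j with
    | zero => simp [f0]
    | succ j ih =>
      intro hj hmem
      have hnj := ih (by omega)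
      obtain ⟨i, h1, h2, h3, h4⟩ := fs j (by omega)
      have hin : n = i := by
        by_contra hne
        exact hnj ((h3 n hne).2 hmem)
      subst hin
      have h5 : n - 1 ∈ f (j + 1) := (h3 _ (by omega)).1 (h2.resolve_left (by omega))
      have := card_le_one.1 (fb (j + 1) hj).2 _ h5 _ hmem
      omega
  exact this T le_rfl (by simp [fT])

/-- In a time-optimal solution the highest pebbled square never decreases: if at time `j'` all
pebbles are on `1, …, x`, the moves above `x` made before `j'` could be dropped. -/
lemma subset_of_optimal {n S T : ℕ} {f : ℕ → Finset ℕ} (f0 : f 0 = ∅)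
    (fb : ∀ j ≤ T, f j ⊆ Icc 1 n ∧ (f j).card ≤ S) (fs : ∀ j < T, Step (f j) (f (j + 1)))
    (hopt : ∀ T' < T, ¬ Walk n S T' ∅ (f T)) {j j' x : ℕ} (hj' : j' ≤ T) (hj : j ≤ j')
    (hx : ∀ y ∈ f j', y ≤ x) : ∀ y ∈ f j, y ≤ x := by
  intro y hy
  by_contra! hxy
  have e0 : lo x (f 0) = ∅ := by ext z; simp [mem_lo, f0]
  have e1 : lo x (f j') = f j' := by
    ext z; rw [mem_lo]; exact ⟨fun h => h.1, fun h => ⟨h, hx z h⟩⟩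
  have w1 := walk_of_seq (φ := lo x) (f := f) (n := n) (S := S) (Nat.zero_le j') (fun i hi => by
      rcases (fs i (by omega)).lo_hi x with h | h
      · exact Or.inl h.1
      · exact Or.inr h.1)
    (fun i _ hi => ⟨(filter_subset _ _).trans (fb i (by omega)).1,
      (card_filter_le _ _).trans (fb i (by omega)).2⟩)
  have w2 := walk_of_seq (φ := id) (f := f) (n := n) (S := S) hj'
    (fun i hi => Or.inr (fs i hi)) (fun i _ hi => fb i hi)
  rw [e0, e1] at w1
  refine hopt _ ?_ (w1.trans w2)
  have c1 := cnt_lo_add_hi (Nat.zero_le j') (fun i hi => fs i (by omega)) x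
  have c2 := cnt_le f id j' T
  have c3 : cnt f (hi x) 0 j' ≠ 0 := by
    intro h0
    have h1 : cnt f (hi x) 0 j = 0 := by
      have := cnt_add f (hi x) (Nat.zero_le j) hj
      omega
    have w3 := walk_hi (n := n) (S := S) (Nat.zero_le j) (fun i hi => fs i (by omega))
      (fun i hi => (fb i (by omega)).1) x (fun i _ hi => by
        have := card_lo_add_hi x (f i)
        have := (fb i (by omega)).2
        omega)
    rw [h1] at w3
    have e : hi x (f 0) = hi x (f j) := w3.eq_of_zero
    have : y - x ∈ hi x (f j) := mem_hi.2 ⟨by omega, by rwa [Nat.sub_add_cancel hxy.le]⟩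
    rw [← e, mem_hi, f0] at this
    simp at this
  omega

/-- Every solution for `n ≥ 2` squares takes at least as long as Bennett's strategy with some
intermediate square `m`. -/
theorem Walk.split (S : ℕ) : ∀ T n : ℕ, 2 ≤ n → Walk n (S + 1) T ∅ {n} →
    ∃ m t₁ t₂ t₃, 1 ≤ m ∧ m < n ∧ Walk m (S + 1) t₁ ∅ {m} ∧ Walk m S t₂ ∅ {m} ∧
      Walk (n - m) S t₃ ∅ {n - m} ∧ t₁ + t₂ + t₃ ≤ T := by
  intro T
  induction T using Nat.strong_induction_on with
  | _ T ih =>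
  intro n hn hw
  rcases Nat.eq_zero_or_pos S with rfl | hS
  · exact (not_walk_one hn hw).elim
  by_cases hopt : ∃ T' < T, Walk n (S + 1) T' ∅ {n}
  · obtain ⟨T', hT', hw'⟩ := hopt
    obtain ⟨m, t₁, t₂, t₃, h1, h2, h3, h4, h5, h6⟩ := ih T' hT' n hn hw'
    exact ⟨m, t₁, t₂, t₃, h1, h2, h3, h4, h5, by omega⟩
  push Not at hopt
  obtain ⟨f, f0, fT, fb, fs⟩ := hw.exists_seq
  have fb1 : ∀ j ≤ T, f j ⊆ Icc 1 n := fun j hj => (fb j hj).1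
  have fb2 : ∀ j ≤ T, (f j).card ≤ S + 1 := fun j hj => (fb j hj).2
  rw [← fT] at hopt
  have hmono : ∀ {j j' x : ℕ}, j' ≤ T → j ≤ j' → (∀ y ∈ f j', y ≤ x) → ∀ y ∈ f j, y ≤ x :=
    fun h1 h2 h3 => subset_of_optimal f0 fb fs hopt h1 h2 h3
  have hTpos : 0 < T := by
    rcases Nat.eq_zero_or_pos T with rfl | h
    · rw [f0] at fT
      exact absurd fT.symm (singleton_ne_empty n)
    · exact h
  have lo0 : ∀ a, lo a (f 0) = ∅ := fun a => by ext x; simp [mem_lo, f0]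
  have hi0 : ∀ a, hi a (f 0) = ∅ := fun a => by ext x; simp [mem_hi, f0]
  have loT : ∀ a < n, lo a (f T) = ∅ := fun a ha => by
    ext x; simp only [mem_lo, fT, mem_singleton, notMem_empty, iff_false]; omega
  have hiT : ∀ a < n, hi a (f T) = {n - a} := fun a ha => by
    ext x; simp only [mem_hi, fT, mem_singleton]; omega
  have lown : ∀ j ≤ T, ∀ x, IsLow n (f j) x → 1 ≤ x ∧ x < n := fun j hj x hx => by
    have h1 := mem_Icc.1 (fb1 j hj hx.1)
    have h2 := hx.2.1
    omega
  -- `m` is the highest position ever taken by the lowest pebble, square `n` being ignored.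
  obtain ⟨m, ⟨jm, hjm, hm⟩, hmax⟩ : ∃ m, (∃ j ≤ T, IsLow n (f j) m) ∧
      ∀ x, (∃ j ≤ T, IsLow n (f j) x) → x ≤ m := by
    refine exists_greatest _ n (fun x ⟨j, hj, hx⟩ => (lown j hj x hx).2.le) ?_
    obtain ⟨i, h1, h2, h3, h4⟩ := fs 0 hTpos
    have hi1 : i = 1 := by simpa [f0] using h2
    have : 1 ∈ f 1 := by
      rw [hi1, f0] at h4
      simpa using h4
    obtain ⟨x, hx⟩ := exists_isLow (n := n) ⟨1, this, by omega⟩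
    exact ⟨x, 1, hTpos, hx⟩
  have hmn := lown jm hjm m hm
  by_cases hcase : ∃ j ≤ T, IsLow n (f j) m ∧ ∀ j', j ≤ j' → j' ≤ T → ∃ y ∈ f j', m < y
  · -- From time `j` on a pebble above `m` is always present, so `m` itself works.
    obtain ⟨j, hj, hlow, hab⟩ := hcase
    have w1 := walk_lo (S := S + 1) (Nat.zero_le j) (fun i hi => fs i (by omega))
      (fun i hi => fb1 i (by omega)) m
      (fun i _ hi => (card_filter_le _ _).trans (fb2 i (by omega)))
    have w2 := walk_lo (S := S) hj fs fb1 m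
      (fun i h1 h2 => card_lo_le (fb2 i h2) (hab i h1 h2))
    have w3 := walk_hi (S := S) (Nat.zero_le T) fs fb1 m
      (fun i _ hi => card_hi_le hS (fb2 i hi) (fun x hx => hmax x ⟨i, hi, hx⟩))
    rw [lo0, hlow.lo_eq hmn.2] at w1
    rw [loT m hmn.2, hlow.lo_eq hmn.2] at w2
    rw [hi0, hiT m hmn.2] at w3
    refine ⟨m, _, _, _, hmn.1, hmn.2, w1, w2.symm, w3, ?_⟩
    have := cnt_lo_add_hi (Nat.zero_le T) fs m
    have := cnt_add f (lo m) (Nat.zero_le j) hj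
    omega
  -- Otherwise let `t` be the last time with lowest pebble `m`; then `f t = {m}`.
  push Not at hcase
  obtain ⟨t, ⟨htT, hlow⟩, htmax⟩ : ∃ t, (t ≤ T ∧ IsLow n (f t) m) ∧
      ∀ j, (j ≤ T ∧ IsLow n (f j) m) → j ≤ t :=
    exists_greatest _ T (fun x h => h.1) ⟨jm, hjm, hm⟩
  have ft : f t = {m} := by
    obtain ⟨j', h1, h2, h3⟩ := hcase t htT hlow
    have h4 := hmono h2 h1 h3
    rw [← hlow.lo_eq hmn.2]
    ext x; rw [mem_lo]; exact ⟨fun h => ⟨h, h4 x h⟩, fun h => h.1⟩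
  have htT' : t < T := by
    rcases htT.lt_or_eq with h | h
    · exact h
    · rw [h, fT] at ft
      have := singleton_injective ft
      omega
  have hhigh : ∀ j, t ≤ j → j ≤ T → ∃ y ∈ f j, m ≤ y := by
    intro j h1 h2
    by_contra! hcon
    have := hmono (x := m - 1) h2 h1 (fun y hy => by have := hcon y hy; omega) m (by simp [ft])
    omega
  have hlt : ∀ j, t < j → j ≤ T → ∀ x, IsLow n (f j) x → x < m := by
    intro j h1 h2 x hx
    rcases (hmax x ⟨j, h2, hx⟩).lt_or_eq with h | rfl
    · exact h
    · have := htmax j ⟨h2, hx⟩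
      omega
  -- `r` is the highest position of the lowest pebble after time `t`.
  obtain ⟨r, ⟨j₂, htj, hjT, hr⟩, hrmax⟩ : ∃ r, (∃ j, t < j ∧ j ≤ T ∧ IsLow n (f j) r) ∧
      ∀ x, (∃ j, t < j ∧ j ≤ T ∧ IsLow n (f j) x) → x ≤ r := by
    refine exists_greatest _ n (fun x ⟨j, _, hj, hx⟩ => (lown j hj x hx).2.le) ?_
    have : m ∈ f (t + 1) := by
      obtain ⟨y, hy, hmy⟩ := hhigh (t + 1) (by omega) (by omega)
      obtain ⟨i, h1, h2, h3, h4⟩ := fs t htT'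
      by_cases hmi : m = i
      · subst hmi
        have : y ≠ m := by
          rintro rfl
          exact (h4.1 (by simp [ft])) hy
        have := (h3 y this).2 hy
        rw [ft, mem_singleton] at this
        contradiction
      · exact (h3 m hmi).1 (by simp [ft])
    obtain ⟨x, hx⟩ := exists_isLow (n := n) ⟨m, this, by omega⟩
    exact ⟨x, t + 1, by omega, by omega, hx⟩
  have hrm : r < m := hlt j₂ htj hjT r hr
  have hr1 := (lown j₂ hjT r hr).1
  have hit : ∀ a < m, hi a (f t) = {m - a} := fun a ha => by
    ext x; simp only [mem_hi, ft, mem_singleton]; omega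
  -- For `r ≤ a < m`, the moves above `a` after time `t` fit into `S` pebbles.
  have wup : ∀ a, r ≤ a → a < m → Walk (n - a) S (cnt f (hi a) t T) {m - a} {n - a} := by
    intro a h1 h2
    have := walk_hi (S := S) htT fs fb1 a (fun i hti hiT => by
      rcases hti.lt_or_eq with h | h
      · exact card_hi_le hS (fb2 i hiT) (fun x hx => (hrmax x ⟨i, h, hiT, hx⟩).trans h1)
      · rw [← h, hit a h2, card_singleton]; exact hS)
    rwa [hit a h2, hiT a (by omega)] at this
  have w0 := walk_lo (S := S + 1) (Nat.zero_le t) (fun i hi => fs i (by omega))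
    (fun i hi => fb1 i (by omega)) m
    (fun i _ hi => (card_filter_le _ _).trans (fb2 i (by omega)))
  rw [lo0, hlow.lo_eq hmn.2] at w0
  have c0 := cnt_le f (lo m) 0 t
  obtain ⟨q, a₁, a₂, a₃, hq1, hqm, v1, v2, v3, hsum⟩ := ih _ (by omega) m (by omega) w0
  by_cases hqr : q ≤ r
  · -- Split at `r`: reach `r` via `q`, then `m`, and keep the pebble on `r`.
    have hcap : ∀ i, t ≤ i → i ≤ T → (lo r (f i)).card ≤ S := fun i h1 h2 => by
      obtain ⟨y, hy, hmy⟩ := hhigh i h1 h2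
      exact card_lo_le (fb2 i h2) ⟨y, hy, by omega⟩
    have w1 := walk_lo (S := S) htj.le (fun i hi => fs i (by omega))
      (fun i hi => fb1 i (by omega)) r (fun i h1 h2 => hcap i h1 (by omega))
    have w2 := walk_lo (S := S) hjT fs fb1 r (fun i h1 h2 => hcap i (by omega) h2)
    have lot : lo r (f t) = ∅ := by
      ext x; simp only [mem_lo, ft, mem_singleton, notMem_empty, iff_false]; omega
    rw [lot, hr.lo_eq (by omega)] at w1
    rw [hr.lo_eq (by omega), loT r (by omega)] at w2
    obtain ⟨p, hp, w3⟩ := v3.shorten (a := m - r) (by omega) (by omega)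
    have w4 := (w3.mono (n' := n - r) (by omega) le_rfl).trans (wup r le_rfl hrm)
    have c1 := cnt_lo_add_hi htT fs r
    have c2 := cnt_add f (lo r) htj.le hjT
    rcases hqr.lt_or_eq with hlt' | rfl
    · obtain ⟨y, hy, w5⟩ := w1.shorten (a := r - q) (by omega) (by omega)
      have w6 := Walk.bennett hq1 (by omega) v1 v2 w5
      rw [Nat.add_sub_cancel' hqr] at w6
      exact ⟨r, _, _, _, hr1, by omega, w6, w2.symm, w4, by omega⟩
    · exact ⟨q, _, _, _, hr1, by omega, v1, w2.symm, w4, by omega⟩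
  · -- Split at `q`: the pebble on `q` need not be removed before `n` is reached.
    have w4 := (v3.mono (n' := n - q) (by omega) le_rfl).trans (wup q (by omega) hqm)
    have := cnt_le f (hi q) t T
    exact ⟨q, _, _, _, hq1, by omega, v1, v2, w4, by omega⟩

/-! ### The recursion for `F` -/

lemma F_le_of_walk {n S t : ℕ} (h : Walk n S t ∅ {n}) : F n S ≤ t := by
  obtain ⟨f, f0, ft, fb, fs⟩ := h.exists_seq
  refine sInf_le ⟨⟨t, f, fun j hj => (fb j hj).1, f0, ft, ?_⟩, ?_, rfl⟩
  · intro j h1 h2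
    obtain ⟨i, -, k2, k3, k4⟩ := fs (j - 1) (by omega)
    rw [Nat.sub_add_cancel h1] at k3 k4
    refine ⟨i, ?_, k2⟩
    ext x
    rw [mem_symmDiff, mem_singleton]
    by_cases hx : x = i
    · subst hx; tauto
    · have := k3 x hx; tauto
  · refine Finset.sup_le fun j hj => ?_
    exact (fb j (by have := mem_range.1 hj; simp only at this; omega)).2

lemma walk_of_solution {n S : ℕ} (s : PebbleSolution n) (hs : s.space ≤ S) :
    Walk n S s.T ∅ {n} := by
  have hcard : ∀ j ≤ s.T, (s.c j).card ≤ S := fun j hj =>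
    le_trans (Finset.le_sup (f := fun j => (s.c j).card) (mem_range.2 (by omega))) hs
  have key : ∀ j ≤ s.T, Walk n S j ∅ (s.c j) := by
    intro j
    induction j with
    | zero =>
      intro _
      rw [s.init]
      exact .nil _ (by simp) (by simp)
    | succ j ih =>
      intro hj
      refine .snoc _ _ _ _ (ih (by omega)) ?_ (s.subset _ hj) (hcard _ hj)
      obtain ⟨i, h1, h2⟩ := s.move (j + 1) (by omega) hj
      rw [Nat.add_sub_cancel] at h1 h2
      have hx : ∀ x, ((x ∈ s.c j ∧ x ∉ s.c (j + 1)) ∨ (x ∈ s.c (j + 1) ∧ x ∉ s.c j)) ↔ x = i := by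
        intro x
        rw [← mem_symmDiff, h1, mem_singleton]
      have hii := (hx i).2 rfl
      refine ⟨i, ?_, h2, fun x hne => ?_, by tauto⟩
      · rcases hii with h | h
        · exact (mem_Icc.1 (s.subset j (by omega) h.1)).1
        · exact (mem_Icc.1 (s.subset (j + 1) hj h.1)).1
      · have := hx x; tauto
  have := key s.T le_rfl
  rwa [s.final] at this

lemma exists_walk {n S : ℕ} (h : F n S ≠ ⊤) : ∃ t : ℕ, F n S = t ∧ Walk n S t ∅ {n} := by
  have hne : {t : ℕ∞ | ∃ s : PebbleSolution n, s.space ≤ S ∧ t = (s.T : ℕ∞)}.Nonempty := by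
    by_contra hcon
    rw [Set.not_nonempty_iff_eq_empty] at hcon
    exact h (by rw [F, hcon, sInf_empty])
  obtain ⟨s, hs, ht⟩ := csInf_mem hne
  exact ⟨s.T, ht, walk_of_solution s hs⟩

lemma F_one (S : ℕ) : F 1 (S + 1) = 1 := by
  refine le_antisymm ?_ ?_
  · refine (F_le_of_walk (t := 1) ?_).trans (by simp)
    refine .snoc 0 ∅ ∅ {1} (.nil _ (by simp) (by simp)) ?_ (by simp) (by simp)
    exact ⟨1, le_rfl, Or.inl rfl, fun x hx => by simp [hx], by simp⟩
  · by_cases h : F 1 (S + 1) = ⊤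
    · simp [h]
    obtain ⟨t, ht, w⟩ := exists_walk h
    rw [ht]
    rcases Nat.eq_zero_or_pos t with rfl | hpos
    · exact absurd w.eq_of_zero.symm (singleton_ne_empty 1)
    · exact_mod_cast hpos

lemma F_one_space {n : ℕ} (hn : 2 ≤ n) : F n 1 = ⊤ := by
  by_contra h
  obtain ⟨t, ht, w⟩ := exists_walk h
  exact not_walk_one hn w

lemma F_mono {a b : ℕ} (S : ℕ) (ha : 1 ≤ a) (hab : a ≤ b) : F a S ≤ F b S := by
  by_cases h : F b S = ⊤
  · simp [h]
  obtain ⟨t, ht, w⟩ := exists_walk h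
  obtain ⟨u, hu, w'⟩ := w.shorten ha hab
  rw [ht]
  exact (F_le_of_walk w').trans (by exact_mod_cast hu)

lemma F_le_split {a b : ℕ} (S : ℕ) (ha : 1 ≤ a) (hb : 1 ≤ b) :
    F (a + b) (S + 1) ≤ F a (S + 1) + F a S + F b S := by
  by_cases h1 : F a (S + 1) = ⊤
  · simp [h1]
  by_cases h2 : F a S = ⊤
  · simp [h2]
  by_cases h3 : F b S = ⊤
  · simp [h3]
  obtain ⟨t₁, e1, w1⟩ := exists_walk h1
  obtain ⟨t₂, e2, w2⟩ := exists_walk h2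
  obtain ⟨t₃, e3, w3⟩ := exists_walk h3
  rw [e1, e2, e3]
  exact (F_le_of_walk (Walk.bennett ha hb w1 w2 w3)).trans (by push_cast; exact le_rfl)

lemma exists_split_le {n : ℕ} (S : ℕ) (hn : 2 ≤ n) : ∃ a b, 1 ≤ a ∧ 1 ≤ b ∧ a + b = n ∧
    F a (S + 1) + F a S + F b S ≤ F n (S + 1) := by
  by_cases h : F n (S + 1) = ⊤
  · exact ⟨1, n - 1, le_rfl, by omega, by omega, by simp [h]⟩
  obtain ⟨T, hT, w⟩ := exists_walk h
  obtain ⟨m, t₁, t₂, t₃, h1, h2, w1, w2, w3, hs⟩ := Walk.split S T n hn w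
  refine ⟨m, n - m, h1, by omega, by omega, ?_⟩
  rw [hT]
  calc _ ≤ (t₁ : ℕ∞) + t₂ + t₃ :=
        add_le_add (add_le_add (F_le_of_walk w1) (F_le_of_walk w2)) (F_le_of_walk w3)
    _ ≤ T := by exact_mod_cast hs

/-! ### Slopes of `F` -/

/-- The increments `Δ n S` with a natural-number index; `sl S 0 = 0`. -/
noncomputable def sl (S n : ℕ) : ℕ∞ := Δ (n : ℤ) S

lemma sl_zero (S : ℕ) : sl S 0 = 0 := by simp [sl, Δ]

lemma sl_eq {S n : ℕ} (hn : 1 ≤ n) :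
    sl S n = if F (n + 1) S < ⊤ then F (n + 1) S - F n S else ⊤ := by
  have h0 : n ≠ 0 := by omega
  simp [sl, Δ, h0]

lemma sl_top {S n : ℕ} (hn : 1 ≤ n) (h : F (n + 1) S = ⊤) : sl S n = ⊤ := by
  simp [sl_eq hn, h]

lemma F_succ {S n : ℕ} (hn : 1 ≤ n) : F (n + 1) S = F n S + sl S n := by
  rw [sl_eq hn]
  split_ifs with h
  · rw [add_tsub_cancel_of_le (F_mono S hn (Nat.le_succ n))]
  · rw [not_lt_top_iff.1 h]; simp

lemma sl_eq_of_add {S n : ℕ} {v : ℕ∞} (hn : 1 ≤ n) (h : F n S ≠ ⊤)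
    (hv : F (n + 1) S = F n S + v) : sl S n = v := by
  rw [F_succ hn] at hv
  exact (WithTop.add_left_inj h).1 hv

lemma sl_one_space {n : ℕ} (hn : 1 ≤ n) : sl 1 n = ⊤ := sl_top hn (F_one_space (by omega))

lemma sl_one_of_two_le (S : ℕ) : sl (S + 2) 1 = 2 := by
  refine sl_eq_of_add le_rfl (by simp [F_one]) ?_
  have h1 := F_one S
  have h2 := F_one (S + 1)
  rw [h2]
  refine le_antisymm ?_ ?_
  · have := F_le_split (a := 1) (b := 1) (S + 1) le_rfl le_rfl
    rw [h2, h1] at this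
    exact this.trans (by norm_num)
  · obtain ⟨a, b, ha, hb, hab, h⟩ := exists_split_le (n := 2) (S + 1) le_rfl
    obtain rfl : a = 1 := by omega
    obtain rfl : b = 1 := by omega
    rw [h2, h1] at h
    exact le_trans (by norm_num) h

lemma two_le_sl_one (S : ℕ) : 2 ≤ sl (S + 1) 1 := by
  rcases S with _ | S
  · simp [sl_one_space]
  · rw [sl_one_of_two_le]

/-- The slopes of `n ↦ F n (S + 1) + F n S`. -/
noncomputable def gs (S n : ℕ) : ℕ∞ := sl (S + 1) n + sl S n

lemma add_slopes_le {u s : ℕ → ℕ∞} {a d : ℕ} {v : ℕ∞}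
    (hu : ∀ j, a ≤ j → u (j + 1) = u j + s j) (hv : ∀ j, a ≤ j → j < a + d → v ≤ s j) :
    u a + d * v ≤ u (a + d) := by
  induction d with
  | zero => simp
  | succ d ih =>
    have := ih (fun j h1 h2 => hv j h1 (by omega))
    rw [← add_assoc, hu _ (by omega)]
    push_cast
    rw [add_mul, one_mul, ← add_assoc]
    exact add_le_add this (hv _ (by omega) (by omega))

lemma le_add_slopes {u s : ℕ → ℕ∞} {a d : ℕ} {v : ℕ∞}
    (hu : ∀ j, a ≤ j → u (j + 1) = u j + s j) (hv : ∀ j, a ≤ j → j < a + d → s j ≤ v) :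
    u (a + d) ≤ u a + d * v := by
  induction d with
  | zero => simp
  | succ d ih =>
    have := ih (fun j h1 h2 => hv j h1 (by omega))
    rw [← add_assoc, hu _ (by omega)]
    push_cast
    rw [add_mul, one_mul, ← add_assoc]
    exact add_le_add this (hv _ (by omega) (by omega))

/-- An exchange argument: a split `(a, b)` of `n` at which the last slopes used do not exceed the
next slopes available is optimal, as soon as the slopes involved are nondecreasing. -/
lemma F_eq_of_certificate {S n a b : ℕ} (ha : 1 ≤ a) (hb : 1 ≤ b) (hab : a + b = n)
    (hh : Monotone (sl S)) (hs : ∀ i j, i ≤ j → j + 2 ≤ n → sl (S + 1) i ≤ sl (S + 1) j)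
    (h1 : gs S (a - 1) ≤ sl S b) (h2 : sl S (b - 1) ≤ gs S a) :
    F n (S + 1) = F a (S + 1) + F a S + F b S := by
  have hgs : ∀ i j, i ≤ j → j + 2 ≤ n → gs S i ≤ gs S j := fun i j h k =>
    add_le_add (hs i j h k) (hh h)
  refine le_antisymm (hab ▸ F_le_split S ha hb) ?_
  obtain ⟨a', b', ha', hb', hab', h⟩ := exists_split_le (n := n) S (by omega)
  refine le_trans ?_ h
  have hg : ∀ j, 1 ≤ j → F (j + 1) (S + 1) + F (j + 1) S = F j (S + 1) + F j S + gs S j := by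
    intro j hj
    rw [F_succ hj, F_succ hj, gs]
    exact add_add_add_comm _ _ _ _
  rcases le_total a a' with haa | haa
  · obtain ⟨d, rfl⟩ := Nat.exists_eq_add_of_le haa
    obtain rfl : b = b' + d := by omega
    have k1 := add_slopes_le (u := fun j => F j (S + 1) + F j S) (s := gs S) (a := a) (d := d)
      (v := gs S a) (fun j hj => hg j (by omega)) (fun j h1 h2 => hgs a j h1 (by omega))
    have k2 := le_add_slopes (u := fun j => F j S) (s := sl S) (a := b') (d := d)
      (v := gs S a) (fun j hj => F_succ (by omega))
      (fun j h3 h4 => (hh (show j ≤ b' + d - 1 by omega)).trans h2)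
    calc _ ≤ F a (S + 1) + F a S + (F b' S + d * gs S a) := add_le_add le_rfl k2
      _ = F a (S + 1) + F a S + d * gs S a + F b' S := by ac_rfl
      _ ≤ _ := add_le_add k1 le_rfl
  · obtain ⟨d, rfl⟩ := Nat.exists_eq_add_of_le haa
    obtain rfl : b' = b + d := by omega
    have k1 := le_add_slopes (u := fun j => F j (S + 1) + F j S) (s := gs S) (a := a') (d := d)
      (v := sl S b) (fun j hj => hg j (by omega))
      (fun j h3 h4 => (hgs j (a' + d - 1) (by omega) (by omega)).trans h1)
    have k2 := add_slopes_le (u := fun j => F j S) (s := sl S) (a := b) (d := d)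
      (v := sl S b) (fun j hj => F_succ (by omega)) (fun j h3 h4 => hh h3)
    calc _ ≤ F a' (S + 1) + F a' S + d * sl S b + F b S := add_le_add k1 le_rfl
      _ = F a' (S + 1) + F a' S + (F b S + d * sl S b) := by ac_rfl
      _ ≤ _ := add_le_add le_rfl k2

/-- The state of the greedy merge after `n` squares: a split `(a, b)` of `n` whose last used slopes
do not exceed the next available ones (`h1`, `h2`; hence optimal by `F_eq_of_certificate`), together
with the facts that the slopes of `F · (S + 1)` are nondecreasing up to index `n - 1` and that the
last of them does not exceed the next available slopes. -/
structure Merge (S n a b : ℕ) : Prop where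
  ha : 1 ≤ a
  hb : 1 ≤ b
  hab : a + b = n
  h1 : gs S (a - 1) ≤ sl S b
  h2 : sl S (b - 1) ≤ gs S a
  mono : ∀ i j, i ≤ j → j + 1 ≤ n → sl (S + 1) i ≤ sl (S + 1) j
  le1 : sl (S + 1) (n - 1) ≤ gs S a
  le2 : sl (S + 1) (n - 1) ≤ sl S b

lemma mono_extend {s : ℕ → ℕ∞} {n : ℕ} (h : ∀ i j, i ≤ j → j + 1 ≤ n → s i ≤ s j)
    (hn : 1 ≤ n) (hl : s (n - 1) ≤ s n) : ∀ i j, i ≤ j → j + 1 ≤ n + 1 → s i ≤ s j := by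
  intro i j hij hj
  rcases hij.eq_or_lt with rfl | hij
  · exact le_rfl
  rcases (show j ≤ n by omega).lt_or_eq with hjn | rfl
  · exact h i j hij.le hjn
  · exact (h i (j - 1) (by omega) (by omega)).trans hl

/-- The greedy merge proceeds by taking the smaller of the two next slopes, and that slope is the
next slope of `F · (S + 1)`. -/
lemma Merge.next {S n a b : ℕ} (hS : 1 ≤ S) (hh : Monotone (sl S)) (M : Merge S n a b) :
    sl (S + 1) n = min (gs S a) (sl S b) ∧ ∃ a' b', Merge S (n + 1) a' b' := by
  obtain ⟨ha, hb, hab, h1, h2, mono, le1, le2⟩ := M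
  obtain ⟨S, rfl⟩ := Nat.exists_eq_add_of_le' hS
  have hF : F n (S + 1 + 1) = F a (S + 1 + 1) + F a (S + 1) + F b (S + 1) :=
    F_eq_of_certificate ha hb hab hh (fun i j h k => mono i j h (by omega)) h1 h2
  rcases le_total (gs (S + 1) a) (sl (S + 1) b) with hle | hle
  · have h2' : sl (S + 1) (b - 1) ≤ gs (S + 1) (a + 1) := by
      rcases hb.eq_or_lt with rfl | hb'
      · simp [sl_zero]
      · exact h2.trans (add_le_add (mono _ _ (by omega) (by omega)) (hh (by omega)))
    have hF' : F (n + 1) (S + 1 + 1) = F (a + 1) (S + 1 + 1) + F (a + 1) (S + 1) + F b (S + 1) :=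
      F_eq_of_certificate (by omega) hb (by omega) hh (fun i j h k => mono i j h (by omega))
        (by simpa using hle) h2'
    have hsl : sl (S + 1 + 1) n = gs (S + 1) a := by
      by_cases htop : F n (S + 1 + 1) = ⊤
      · have e1 : sl (S + 1 + 1) n = ⊤ := by
          refine sl_top (by omega) ?_
          have := F_mono (S + 1 + 1) (show 1 ≤ n by omega) (Nat.le_succ n)
          rw [htop] at this
          exact top_le_iff.1 this
        rw [e1, eq_comm]
        rw [hF] at htop
        simp only [ENat.add_eq_top] at htop
        rcases htop with (h | h) | h
        · have : sl (S + 1 + 1) a = ⊤ := sl_top ha (by rw [F_succ ha, h]; simp)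
          simp [gs, this]
        · have : sl (S + 1) a = ⊤ := sl_top ha (by rw [F_succ ha, h]; simp)
          simp [gs, this]
        · have hb2 : 1 ≤ b - 1 := by
            by_contra hcon
            obtain rfl : b = 1 := by omega
            simp [F_one] at h
          have : sl (S + 1) (b - 1) = ⊤ := sl_top hb2 (by rwa [Nat.sub_add_cancel hb])
          rw [this] at h2
          exact top_le_iff.1 h2
      · refine sl_eq_of_add (by omega) htop ?_
        rw [hF', hF, F_succ ha, F_succ ha, gs]
        ac_rfl
    have hmono := mono_extend mono (by omega) (by rw [hsl]; exact le1)
    refine ⟨by rw [hsl, min_eq_left hle], a + 1, b, by omega, hb, by omega, by simpa using hle,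
      h2', hmono, ?_, ?_⟩
    · rw [Nat.add_sub_cancel, hsl]
      exact add_le_add (hmono _ _ (by omega) (by omega)) (hh (by omega))
    · rw [Nat.add_sub_cancel, hsl]
      exact hle
  · have h1' : gs (S + 1) (a - 1) ≤ sl (S + 1) (b + 1) := h1.trans (hh (by omega))
    have hF' : F (n + 1) (S + 1 + 1) = F a (S + 1 + 1) + F a (S + 1) + F (b + 1) (S + 1) :=
      F_eq_of_certificate ha (by omega) (by omega) hh (fun i j h k => mono i j h (by omega))
        h1' (by simpa using hle)
    have hsl : sl (S + 1 + 1) n = sl (S + 1) b := by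
      by_cases htop : F n (S + 1 + 1) = ⊤
      · have e1 : sl (S + 1 + 1) n = ⊤ := by
          refine sl_top (by omega) ?_
          have := F_mono (S + 1 + 1) (show 1 ≤ n by omega) (Nat.le_succ n)
          rw [htop] at this
          exact top_le_iff.1 this
        rw [e1, eq_comm]
        rw [hF] at htop
        simp only [ENat.add_eq_top] at htop
        have aux : F a (S + 1 + 1) = ⊤ ∨ F a (S + 1) = ⊤ → sl (S + 1) b = ⊤ := by
          intro h
          have ha2 : 1 ≤ a - 1 := by
            by_contra hcon
            obtain rfl : a = 1 := by omega
            simp [F_one] at h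
          have : gs (S + 1) (a - 1) = ⊤ := by
            rcases h with h | h
            · simp [gs, sl_top ha2 (show F (a - 1 + 1) (S + 1 + 1) = ⊤ by
                rwa [Nat.sub_add_cancel ha])]
            · simp [gs, sl_top ha2 (show F (a - 1 + 1) (S + 1) = ⊤ by
                rwa [Nat.sub_add_cancel ha])]
          rw [this] at h1
          exact top_le_iff.1 h1
        rcases htop with h | h
        · exact aux h
        · exact sl_top hb (by rw [F_succ hb, h]; simp)
      · refine sl_eq_of_add (by omega) htop ?_
        rw [hF', hF, F_succ hb]
        ac_rfl
    have hmono := mono_extend mono (by omega) (by rw [hsl]; exact le2)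
    refine ⟨by rw [hsl, min_eq_right hle], a, b + 1, ha, by omega, by omega, h1',
      by simpa using hle, hmono, ?_, ?_⟩
    · rw [Nat.add_sub_cancel, hsl]
      exact hle
    · rw [Nat.add_sub_cancel, hsl]
      exact hh (by omega)

lemma exists_merge {S : ℕ} (hS : 1 ≤ S) (hh : Monotone (sl S)) (n : ℕ) (hn : 2 ≤ n) :
    ∃ a b, Merge S n a b := by
  induction n, hn using Nat.le_induction with
  | base =>
    obtain ⟨S, rfl⟩ := Nat.exists_eq_add_of_le' hS
    refine ⟨1, 1, le_rfl, le_rfl, rfl, by simp [gs, sl_zero], by simp [sl_zero], ?_, ?_, ?_⟩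
    · intro i j h k
      rcases Nat.eq_zero_or_pos i with rfl | hi
      · simp [sl_zero]
      · obtain rfl : i = j := by omega
        exact le_rfl
    · exact le_self_add
    · rw [sl_one_of_two_le]; exact two_le_sl_one S
  | succ n hn ih =>
    obtain ⟨a, b, M⟩ := ih
    exact (M.next hS hh).2

lemma sl_monotone (S : ℕ) : Monotone (sl (S + 1)) := by
  induction S with
  | zero =>
    intro i j h
    rcases Nat.eq_zero_or_pos j with rfl | hj
    · rw [Nat.le_zero.1 h]
    · rw [zero_add, sl_one_space hj]; exact le_top
  | succ S ih =>
    intro i j h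
    obtain ⟨a, b, M⟩ := exists_merge (by omega) ih (j + 2) (by omega)
    exact M.mono i j h (by omega)

/-- The slopes of `F · (S + 2)` are obtained by merging those of `F · (S + 2) + F · (S + 1)` and
those of `F · (S + 1)`: the next slope is the smaller candidate at the greedy split. -/
lemma exists_sl_eq (S : ℕ) {n : ℕ} (hn : 2 ≤ n) : ∃ a b, 1 ≤ a ∧ 1 ≤ b ∧ a + b = n ∧
    sl (S + 2) n = min (gs (S + 1) a) (sl (S + 1) b) := by
  obtain ⟨a, b, M⟩ := exists_merge (by omega) (sl_monotone S) n hn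
  exact ⟨a, b, M.ha, M.hb, M.hab, (M.next (by omega) (sl_monotone S)).1⟩

lemma gs_monotone (S : ℕ) : Monotone (gs (S + 1)) := fun _ _ h =>
  add_le_add (sl_monotone (S + 1) h) (sl_monotone S h)

/-- The lower bound on the merged slopes, valid at every split. -/
lemma min_le_sl (S : ℕ) {a₀ b₀ : ℕ} (ha : 1 ≤ a₀) (hb : 1 ≤ b₀) :
    min (gs (S + 1) a₀) (sl (S + 1) b₀) ≤ sl (S + 2) (a₀ + b₀) := by
  obtain ⟨a, b, M⟩ := exists_merge (by omega) (sl_monotone S) (a₀ + b₀) (by omega)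
  rw [(M.next (by omega) (sl_monotone S)).1]
  have hab := M.hab
  rcases lt_trichotomy a a₀ with h | h | h
  · refine (min_le_right _ _).trans (le_min ?_ (sl_monotone S (by omega)))
    exact (sl_monotone S (by omega)).trans M.h2
  · obtain rfl : b = b₀ := by omega
    rw [h]
  · refine (min_le_left _ _).trans (le_min (gs_monotone S h.le) ?_)
    exact (gs_monotone S (by omega)).trans M.h1

lemma sl_anti (S : ℕ) {n : ℕ} (hn : 1 ≤ n) : sl (S + 2) n ≤ sl (S + 1) n := by
  rcases hn.eq_or_lt with rfl | hn'
  · rw [sl_one_of_two_le]; exact two_le_sl_one S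
  · obtain ⟨a, b, ha, hb, hab, h⟩ := exists_sl_eq S hn'
    rw [h]
    exact (min_le_right _ _).trans (sl_monotone S (by omega))

/-! ### Binomial bounds -/

/-- The lower bound on `xk k (S + 1)`. By the merge, a slope above `2 ^ (k + 1)` at `n` splits
`n = a + b` with a slope above `2 ^ k` at `a` and above `2 ^ (k + 1)` at `b`, both for one pebble
less; Pascal's rule concludes. -/
lemma sum_le_of_lt (S : ℕ) : ∀ k n : ℕ, 1 ≤ n → (2 : ℕ∞) ^ k < sl (S + 1) n →
    ∑ i ∈ range (k + 1), S.choose i ≤ n := by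
  induction S with
  | zero =>
    intro k n hn _
    rw [sum_range_succ']
    simpa using hn
  | succ S ih =>
    intro k n hn h
    rcases k with _ | k
    · simpa using hn
    rcases hn.eq_or_lt with rfl | hn'
    · rw [sl_one_of_two_le] at h
      refine absurd h (not_lt.2 ?_)
      exact_mod_cast Nat.le_self_pow (Nat.succ_ne_zero k) 2
    obtain ⟨a, b, ha, hb, hab, e⟩ := exists_sl_eq S hn'
    rw [e, lt_min_iff] at h
    have hb' := ih (k + 1) b hb h.2
    have ha' := ih k a ha (by
      by_contra! hcon
      refine absurd h.1 (not_lt.2 ?_)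
      calc gs (S + 1) a ≤ 2 ^ k + 2 ^ k := add_le_add ((sl_anti S ha).trans hcon) hcon
        _ = 2 ^ (k + 1) := by rw [pow_succ, mul_two])
    have pascal : ∑ i ∈ range (k + 1 + 1), (S + 1).choose i =
        ∑ i ∈ range (k + 1), S.choose i + ∑ i ∈ range (k + 1 + 1), S.choose i := by
      rw [sum_range_succ', sum_range_succ' (fun i => S.choose i) (k + 1)]
      simp only [Nat.choose_succ_succ, sum_add_distrib, Nat.choose_zero_right]
      ring
    omega

/-- The upper bound on `xk k (S + 1)`: if the slope for `S + 2` pebbles exceeds `2 ^ k` at `a`, and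
that for `S + 1` pebbles exceeds `2 ^ (k + 1)` at `b`, then the slope for `S + 2` pebbles exceeds
`2 ^ (k + 1)` at `a + b`. -/
lemma exists_le_choose (S : ℕ) : ∀ k : ℕ, ∃ n, 1 ≤ n ∧ n ≤ (S + k).choose k ∧
    (2 : ℕ∞) ^ k < sl (S + 1) n := by
  induction S with
  | zero =>
    intro k
    refine ⟨1, le_rfl, by simp, ?_⟩
    rw [zero_add, sl_one_space le_rfl]
    exact_mod_cast ENat.natCast_lt_top (2 ^ k)
  | succ S ih =>
    intro k
    induction k with
    | zero =>
      refine ⟨1, le_rfl, by simp, ?_⟩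
      rw [sl_one_of_two_le]; norm_num
    | succ k ihk =>
      obtain ⟨a, ha, ha', hsa⟩ := ihk
      obtain ⟨b, hb, hb', hsb⟩ := ih (k + 1)
      refine ⟨a + b, by omega, ?_, lt_of_lt_of_le (lt_min ?_ hsb) (min_le_sl S ha hb)⟩
      · have : (S + 1 + (k + 1)).choose (k + 1) =
            (S + 1 + k).choose k + (S + (k + 1)).choose (k + 1) := by
          rw [show S + 1 + (k + 1) = (S + 1 + k) + 1 by omega, Nat.choose_succ_succ,
            show S + (k + 1) = S + 1 + k by omega]
        omega
      · calc (2 : ℕ∞) ^ (k + 1) = 2 ^ k + 2 ^ k := by rw [pow_succ, mul_two]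
          _ < sl (S + 1 + 1) a + sl (S + 1 + 1) a := ENat.add_lt_add hsa hsa
          _ ≤ gs (S + 1) a := add_le_add le_rfl (sl_anti S ha)

lemma sl_two_pow (S : ℕ) : sl (S + 1) (2 ^ S) = ⊤ := by
  induction S with
  | zero => exact sl_one_space le_rfl
  | succ S ih =>
    have := min_le_sl S (Nat.one_le_two_pow (n := S)) (Nat.one_le_two_pow (n := S))
    rw [gs, ih, add_top, min_self, top_le_iff] at this
    rwa [pow_succ, mul_two]

end Pebble

open Pebble in
/-- Lemma 2.9: explicit binomial bounds on `xk`. -/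
theorem xk_binomial_bounds (k S : ℕ) (hS : 2 ≤ S) :
    (∑ i ∈ Finset.range (k + 1), Nat.choose (S - 1) i) ≤ xk k S ∧
    xk k S ≤ min (Nat.choose (S + k - 1) k) (2 ^ (S - 1)) := by
  obtain ⟨S, rfl⟩ := Nat.exists_eq_add_of_le' (show 1 ≤ S by omega)
  rw [Nat.add_sub_cancel, show S + 1 + k - 1 = S + k by omega]
  obtain ⟨n, hn, hn', hlt⟩ := exists_le_choose S k
  refine ⟨?_, le_min ?_ ?_⟩
  · -- The defining set is nonempty, so its infimum is one of its members.
    have hmem := Nat.sInf_mem (s := {n : ℕ | 1 ≤ n ∧ (2 : ℕ∞) ^ k < Δ (n : ℤ) (S + 1)})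
      ⟨n, hn, hlt⟩
    exact sum_le_of_lt S k _ hmem.1 hmem.2
  · have hmem : n ∈ {n : ℕ | 1 ≤ n ∧ (2 : ℕ∞) ^ k < Δ (n : ℤ) (S + 1)} := ⟨hn, hlt⟩
    exact (Nat.sInf_le hmem).trans hn'
  · refine Nat.sInf_le ⟨Nat.one_le_two_pow, ?_⟩
    rw [show Δ ((2 ^ S : ℕ) : ℤ) (S + 1) = ⊤ from sl_two_pow S]
    exact_mod_cast ENat.natCast_lt_top (2 ^ k)
end
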